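/- arXiv:2009.02530 — 13 statements merged into one kernel-verified Lean document; each statement's English description precedes it below -/
import Mathlib

section
/- Let ⟨·,·⟩ be nondegenerate and let B(V) = J₀ ⊕ J₁ be any ℤ₂-grading of the Jordan algebra B(V) (J₀, J₁ subspaces with B(V) = J₀ ⊕ J₁, J₀∘J₀ ⊆ J₀, J₀∘J₁ ⊆ J₁, J₁∘J₁ ⊆ J₀). Then J₁ ⊆ {0} × V, J₀ = K·(1,0) ⊕ (J₀ ∩ ({0} × V)), the subspaces W₀ = {u ∈ V : (0,u) ∈ J₀} and W₁ = {w ∈ V : (0,w) ∈ J₁} satisfy V = W₀ ⊕ W₁, and ⟨u,w⟩ = 0 for all u ∈ W₀, w ∈ W₁. In other words, every ℤ₂-grading of B(V) is given by a splitting of V into a direct sum of two orthogonal subspaces. -/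
/-- The Jordan product on `B(V) = K × V` associated to a symmetric bilinear form `b`. -/
def bmul {K V : Type*} [Field K] [AddCommGroup V] [Module K V]
    (b : V →ₗ[K] V →ₗ[K] K) (p q : K × V) : K × V :=
  (p.1 * q.1 + b p.2 q.2, p.1 • q.2 + q.1 • p.2)

/-- Every `ℤ₂`-grading of the Jordan algebra `B(V)` of a nondegenerate symmetric bilinear
form is given by a splitting of `V` into a direct sum of two orthogonal subspaces:
`J₁ ⊆ {0} × V`, `J₀ = K(1,0) ⊕ (J₀ ∩ ({0} × V))`, and with `W₀ = {u : (0,u) ∈ J₀}`,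
`W₁ = {w : (0,w) ∈ J₁}` one has `V = W₀ ⊕ W₁` and `⟨W₀, W₁⟩ = 0`. -/
theorem stmt3 {K V : Type*} [Field K] [AddCommGroup V] [Module K V]
    (h2 : (2 : K) ≠ 0)
    (b : V →ₗ[K] V →ₗ[K] K) (hsymm : ∀ u v : V, b u v = b v u)
    (hnd : ∀ v : V, (∀ u : V, b v u = 0) → v = 0)
    (J₀ J₁ : Submodule K (K × V))
    (hsup : J₀ ⊔ J₁ = ⊤) (hinf : J₀ ⊓ J₁ = ⊥)
    (h00 : ∀ p ∈ J₀, ∀ q ∈ J₀, bmul b p q ∈ J₀)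
    (h01 : ∀ p ∈ J₀, ∀ q ∈ J₁, bmul b p q ∈ J₁)
    (h11 : ∀ p ∈ J₁, ∀ q ∈ J₁, bmul b p q ∈ J₀) :
    J₁ ≤ LinearMap.range (LinearMap.inr K K V) ∧
    J₀ = Submodule.span K {((1 : K), (0 : V))} ⊔
      (J₀ ⊓ LinearMap.range (LinearMap.inr K K V)) ∧
    J₀.comap (LinearMap.inr K K V) ⊔ J₁.comap (LinearMap.inr K K V) = ⊤ ∧
    J₀.comap (LinearMap.inr K K V) ⊓ J₁.comap (LinearMap.inr K K V) = ⊥ ∧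
    (∀ u ∈ J₀.comap (LinearMap.inr K K V), ∀ w ∈ J₁.comap (LinearMap.inr K K V),
      b u w = 0) := by
  have hdis : ∀ p, p ∈ J₀ → p ∈ J₁ → p = 0 := by
    intro p hp hq
    have : p ∈ J₀ ⊓ J₁ := ⟨hp, hq⟩
    rw [hinf] at this
    simpa using this
  have hdec : ∀ p : K × V, ∃ x ∈ J₀, ∃ y ∈ J₁, x + y = p := by
    intro p
    have : p ∈ J₀ ⊔ J₁ := by rw [hsup]; trivial
    exact Submodule.mem_sup.1 this
  have hcomm : ∀ p q, bmul b p q = bmul b q p := by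
    intro p q
    unfold bmul
    rw [hsymm p.2 q.2, mul_comm p.1, add_comm (p.1 • q.2)]
  have hadd : ∀ p q r, bmul b (p + q) r = bmul b p r + bmul b q r := by
    intro p q r
    unfold bmul
    ext
    · simp; ring
    · simp [add_smul, smul_add]; abel
  have hone : ∀ p, bmul b ((1 : K), (0 : V)) p = p := by
    intro p
    simp [bmul]
  have h1 : ((1 : K), (0 : V)) ∈ J₀ := by
    obtain ⟨e, he, f, hf, hef⟩ := hdec ((1 : K), (0 : V))
    have A : bmul b f e = 0 := by
      apply hdis
      · have h : bmul b f e = e - bmul b e e := by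
          rw [eq_sub_iff_add_eq', ← hadd, hef, hone]
        rw [h]
        exact J₀.sub_mem he (h00 e he e he)
      · rw [hcomm]; exact h01 e he f hf
    have B : bmul b f f = 0 := by
      apply hdis
      · exact h11 f hf f hf
      · have h : bmul b f f = f - bmul b e f := by
          rw [eq_sub_iff_add_eq', ← hadd, hef, hone]
        rw [h]
        exact J₁.sub_mem hf (h01 e he f hf)
    have C : f = 0 := by
      rw [← hone f, ← hef, hadd, B, hcomm e f, A, add_zero]
    rw [← hef, C, add_zero]
    exact he
  have hc : ∀ c : K, ((c, 0) : K × V) ∈ J₀ := by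
    intro c
    have := J₀.smul_mem c h1
    simpa using this
  have hz : ∀ q ∈ J₁, q.1 = 0 := by
    intro q hq
    by_contra hne
    have hs := h11 q hq q hq
    have hu : q ∈ J₀ := by
      have h := J₀.add_mem (hc (q.1 - (2 * q.1)⁻¹ * (q.1 * q.1 + b q.2 q.2)))
        (J₀.smul_mem (2 * q.1)⁻¹ hs)
      convert h using 1
      unfold bmul
      ext
      · simp
      · simp only [Prod.snd_add, Prod.smul_snd, zero_add]
        rw [← two_smul K (q.1 • q.2), smul_smul, smul_smul, mul_assoc,
          inv_mul_cancel₀ (mul_ne_zero h2 hne), one_smul]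
    have := hdis q hu hq
    exact hne (by rw [this]; rfl)
  have hrest : ∀ p ∈ J₀, ((0, p.2) : K × V) ∈ J₀ := by
    intro p hp
    have := J₀.sub_mem hp (hc p.1)
    convert this using 1
    ext <;> simp
  refine ⟨?_, ?_, ?_, ?_, ?_⟩
  · intro q hq
    exact ⟨q.2, Prod.ext (hz q hq).symm rfl⟩
  · apply le_antisymm
    · intro p hp
      refine Submodule.mem_sup.2 ⟨(p.1, 0), ?_, (0, p.2), ⟨hrest p hp, p.2, rfl⟩, ?_⟩
      · exact Submodule.mem_span_singleton.2 ⟨p.1, by simp⟩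
      · ext <;> simp
    · refine sup_le ?_ inf_le_left
      rw [Submodule.span_le]
      rintro _ rfl
      exact h1
  · rw [eq_top_iff]
    intro v _
    obtain ⟨x, hx, y, hy, hxy⟩ := hdec (0, v)
    refine Submodule.mem_sup.2 ⟨x.2, hrest x hx, y.2, ?_, congrArg Prod.snd hxy⟩
    have : LinearMap.inr K K V y.2 = y := Prod.ext (hz y hy).symm rfl
    rw [Submodule.mem_comap, this]
    exact hy
  · rw [eq_bot_iff]
    rintro v ⟨hv0, hv1⟩
    exact congrArg Prod.snd (hdis _ hv0 hv1)
  · intro u hu w hw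
    have := hz _ (h01 _ hu _ hw)
    simpa [bmul] using this
end

section
/- Suppose dim V = 2, ⟨·,·⟩ is nondegenerate, and B(V) = J₀ ⊕ J₁ is a nontrivial ℤ₂-grading (J₀, J₁ subspaces with B(V) = J₀ ⊕ J₁, J₀∘J₀ ⊆ J₀, J₀∘J₁ ⊆ J₁, J₁∘J₁ ⊆ J₀, and J₁ ≠ 0). Then exactly one of the following holds: (1) J₀ = K·(1,0) and J₁ = {0} × V; or (2) there exist vectors w, w' ∈ V forming a basis of V with ⟨w,w'⟩ = 0 such that J₀ is spanned by (1,0) and (0,w), and J₁ is spanned by (0,w'). -/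
/-- If `dim V = 2`, the form is nondegenerate and `B(V) = J₀ ⊕ J₁` is a nontrivial
`ℤ₂`-grading, then exactly one of the following holds: (1) `J₀ = K(1,0)` and
`J₁ = {0} × V`; or (2) there is a basis `w, w'` of `V` with `⟨w,w'⟩ = 0` such that
`J₀ = span{(1,0),(0,w)}` and `J₁ = span{(0,w')}`. -/
theorem stmt4 {K V : Type*} [Field K] [AddCommGroup V] [Module K V]
    [FiniteDimensional K V] (hdim : Module.finrank K V = 2)
    (h2 : (2 : K) ≠ 0)
    (b : V →ₗ[K] V →ₗ[K] K) (hsymm : ∀ u v : V, b u v = b v u)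
    (hnd : ∀ v : V, (∀ u : V, b v u = 0) → v = 0)
    (J₀ J₁ : Submodule K (K × V))
    (hsup : J₀ ⊔ J₁ = ⊤) (hinf : J₀ ⊓ J₁ = ⊥)
    (h00 : ∀ p ∈ J₀, ∀ q ∈ J₀, bmul b p q ∈ J₀)
    (h01 : ∀ p ∈ J₀, ∀ q ∈ J₁, bmul b p q ∈ J₁)
    (h11 : ∀ p ∈ J₁, ∀ q ∈ J₁, bmul b p q ∈ J₀)
    (hnontriv : J₁ ≠ ⊥) :
    Xor'
      (J₀ = Submodule.span K {((1 : K), (0 : V))} ∧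
        J₁ = LinearMap.range (LinearMap.inr K K V))
      (∃ w w' : V, LinearIndependent K ![w, w'] ∧ Submodule.span K {w, w'} = ⊤ ∧
        b w w' = 0 ∧
        J₀ = Submodule.span K {((1 : K), (0 : V)), ((0 : K), w)} ∧
        J₁ = Submodule.span K {((0 : K), w')}) := by
  have hdis : ∀ p, p ∈ J₀ → p ∈ J₁ → p = 0 := by
    intro p h h'
    have : p ∈ J₀ ⊓ J₁ := ⟨h, h'⟩
    rw [hinf] at this
    simpa using this
  have hdec : ∀ p : K × V, ∃ x ∈ J₀, ∃ y ∈ J₁, x + y = p := by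
    intro p
    have : p ∈ J₀ ⊔ J₁ := by rw [hsup]; trivial
    exact Submodule.mem_sup.1 this
  have hcomm : ∀ p q, bmul b p q = bmul b q p := by
    intro p q
    simp only [bmul, hsymm p.2 q.2, mul_comm p.1 q.1, add_comm (p.1 • q.2)]
  have hadd : ∀ p q r, bmul b p (q + r) = bmul b p q + bmul b p r := by
    intro p q r
    ext
    · simp [bmul]; ring
    · simp [bmul, add_smul]; abel
  have hone : ∀ p, bmul b p (1, 0) = p := by
    intro p
    ext <;> simp [bmul]
  have h1 : ((1 : K), (0 : V)) ∈ J₀ := by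
    obtain ⟨x, hx, y, hy, hxy⟩ := hdec (1, 0)
    have e1 : bmul b x x + bmul b x y = x := by rw [← hadd, hxy, hone]
    have e2 : bmul b y x + bmul b y y = y := by rw [← hadd, hxy, hone]
    have z1 : bmul b x y = 0 := by
      apply hdis _ _ (h01 x hx y hy)
      rw [eq_sub_of_add_eq' e1]
      exact J₀.sub_mem hx (h00 x hx x hx)
    have z2 : bmul b y y = 0 := by
      apply hdis _ (h11 y hy y hy)
      rw [eq_sub_of_add_eq' e2, hcomm]
      exact J₁.sub_mem hy (h01 x hx y hy)
    rw [hcomm, z1, z2] at e2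
    have : y = 0 := by simpa using e2.symm
    rw [← hxy, this, add_zero]
    exact hx
  have hs : ∀ a : K, (a, (0 : V)) ∈ J₀ := by
    intro a
    simpa using J₀.smul_mem a h1
  have hJ0 : ∀ a : K, ∀ u : V, (a, u) ∈ J₀ → ((0 : K), u) ∈ J₀ := by
    intro a u h
    simpa using J₀.sub_mem h (hs a)
  have hJ1 : ∀ p ∈ J₁, p.1 = 0 := by
    rintro ⟨a, u⟩ h
    by_contra ha
    simp only at ha
    have h3 := hJ0 _ _ (h11 _ h _ h)
    have h4 := J₀.smul_mem ((2 * a)⁻¹) h3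
    have h5 : ((0 : K), u) ∈ J₀ := by
      convert h4 using 1
      ext
      · simp
      · simp only [Prod.smul_mk, ← add_smul, smul_smul, ← two_mul]
        rw [inv_mul_cancel₀ (mul_ne_zero h2 ha), one_smul]
    have h6 : (a, u) ∈ J₀ := by simpa using J₀.add_mem (hs a) h5
    have := hdis _ h6 h
    exact ha (congrArg Prod.fst this)
  have hex : ∃ w' : V, w' ≠ 0 ∧ ((0 : K), w') ∈ J₁ := by
    obtain ⟨⟨a, u⟩, h, hne⟩ := Submodule.exists_mem_ne_zero_of_ne_bot hnontriv
    have ha : a = 0 := hJ1 _ h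
    subst ha
    exact ⟨u, fun h0 => hne (by simp [h0]), h⟩
  by_cases hw : ∃ w : V, w ≠ 0 ∧ ((0 : K), w) ∈ J₀
  · obtain ⟨w, hw0, hw⟩ := hw
    obtain ⟨w', hw0', hw'⟩ := hex
    right
    have hli : LinearIndependent K ![w, w'] := by
      rw [LinearIndependent.pair_iff]
      intro s t hst
      have hz : ((0 : K), s • w) = 0 := by
        apply hdis
        · simpa using J₀.smul_mem s hw
        · rw [eq_neg_of_add_eq_zero_left hst, ← neg_smul]
          simpa using J₁.smul_mem (-t) hw'
      have hz' : s • w = 0 := congrArg Prod.snd hz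
      rw [hz', zero_add] at hst
      exact ⟨(smul_eq_zero.1 hz').resolve_right hw0, (smul_eq_zero.1 hst).resolve_right hw0'⟩
    have hspan : Submodule.span K {w, w'} = ⊤ := by
      have := hli.span_eq_top_of_card_eq_finrank' (by simp [hdim])
      simpa [Set.pair_comm] using this
    have hb : b w w' = 0 := by
      have h3 := h01 _ hw _ hw'
      have := hJ1 _ h3
      simpa [bmul] using this
    refine ⟨⟨w, w', hli, hspan, hb, ?_, ?_⟩, ?_⟩
    · apply le_antisymm
      · rintro ⟨a, u⟩ h
        have hu : u ∈ Submodule.span K {w, w'} := by rw [hspan]; trivial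
        obtain ⟨x, y, rfl⟩ := Submodule.mem_span_pair.1 hu
        have hz : ((0 : K), y • w') = 0 := by
          apply hdis
          · simpa using J₀.sub_mem (hJ0 _ _ h) (J₀.smul_mem x hw)
          · simpa using J₁.smul_mem y hw'
        have hz' : y • w' = 0 := congrArg Prod.snd hz
        rw [Submodule.mem_span_pair]
        exact ⟨a, x, by simp [hz']⟩
      · rw [Submodule.span_le]
        rintro p (rfl | rfl)
        · exact h1
        · exact hw
    · apply le_antisymm
      · rintro ⟨a, u⟩ h
        have ha : a = 0 := hJ1 _ h
        subst ha
        have hu : u ∈ Submodule.span K {w, w'} := by rw [hspan]; trivial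
        obtain ⟨x, y, rfl⟩ := Submodule.mem_span_pair.1 hu
        have hz : ((0 : K), x • w) = 0 := by
          apply hdis
          · simpa using J₀.smul_mem x hw
          · simpa using J₁.sub_mem h (J₁.smul_mem y hw')
        have hz' : x • w = 0 := congrArg Prod.snd hz
        rw [Submodule.mem_span_singleton]
        exact ⟨y, by simp [hz']⟩
      · rw [Submodule.span_le]
        rintro p rfl
        exact hw'
    · rintro ⟨h, -⟩
      rw [h, Submodule.mem_span_singleton] at hw
      obtain ⟨a, ha⟩ := hw
      have := congrArg Prod.snd ha
      simp at this
      exact hw0 this.symm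
  · left
    have hz : ∀ a : K, ∀ u : V, (a, u) ∈ J₀ → u = 0 := by
      intro a u h
      by_contra hu
      exact hw ⟨u, hu, hJ0 _ _ h⟩
    refine ⟨⟨?_, ?_⟩, ?_⟩
    · apply le_antisymm
      · rintro ⟨a, u⟩ h
        rw [hz _ _ h, Submodule.mem_span_singleton]
        exact ⟨a, by simp⟩
      · rw [Submodule.span_le]
        rintro p rfl
        exact h1
    · apply le_antisymm
      · rintro ⟨a, u⟩ h
        have ha : a = 0 := hJ1 _ h
        subst ha
        exact ⟨u, rfl⟩
      · rintro _ ⟨v, rfl⟩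
        obtain ⟨⟨a, u⟩, hx, ⟨c, v'⟩, hy, hxy⟩ := hdec (0, v)
        have hu := hz _ _ hx
        have hc : c = 0 := hJ1 _ hy
        subst hu hc
        have : v' = v := by simpa using congrArg Prod.snd hxy
        subst this
        exact hy
    · rintro ⟨w, w', hli, -, -, h0, -⟩
      have hwm : ((0 : K), w) ∈ J₀ := by
        rw [h0]
        exact Submodule.subset_span (by simp)
      exact hw ⟨w, hli.ne_zero 0, hwm⟩
end

section
/- Suppose i ∈ K satisfies i² = −1, and set w₁ = [[i,1],[1,−i]] and w₂ = (1/2)·[[−i,1],[1,i]]. Then w₁ and w₂ are symmetric traceless matrices satisfying w₁∘w₁ = 0, w₂∘w₂ = 0 and w₁∘w₂ = I; moreover J₂ = K·I ⊕ K·w₁ ⊕ K·w₂, so this decomposition is a nontrivial ℤ₃-grading of J₂ with components (J₂)₀ = K·I, (J₂)₁ = K·w₁, (J₂)₂ = K·w₂. -/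
open Matrix

/-- The Jordan product `x ∘ y = (xy + yx)/2` on `2×2` matrices. -/
noncomputable def jmul {K : Type*} [Field K] (x y : Matrix (Fin 2) (Fin 2) K) :
    Matrix (Fin 2) (Fin 2) K :=
  (2 : K)⁻¹ • (x * y + y * x)

/-- The submodule of symmetric `2×2` matrices (the underlying space of `J₂`). -/
def symSub (K : Type*) [Field K] : Submodule K (Matrix (Fin 2) (Fin 2) K) where
  carrier := {x | xᵀ = x}
  add_mem' := by
    intro a b ha hb
    simp only [Set.mem_setOf_eq] at *
    rw [Matrix.transpose_add, ha, hb]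
  zero_mem' := by simp
  smul_mem' := by
    intro c a ha
    simp only [Set.mem_setOf_eq] at *
    rw [Matrix.transpose_smul, ha]

noncomputable def w1 (K : Type*) [Field K] (i : K) : Matrix (Fin 2) (Fin 2) K :=
  !![i, 1; 1, -i]

noncomputable def w2 (K : Type*) [Field K] (i : K) : Matrix (Fin 2) (Fin 2) K :=
  (2 : K)⁻¹ • !![-i, 1; 1, i]

/-- The components of the `ℤ₃`-grading: `A₀ = K·I`, `A₁ = K·w₁`, `A₂ = K·w₂`. -/
noncomputable def Agrade (K : Type*) [Field K] (i : K) :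
    ZMod 3 → Submodule K (Matrix (Fin 2) (Fin 2) K) := fun g =>
  if g = 0 then Submodule.span K {1}
  else if g = 1 then Submodule.span K {w1 K i}
  else Submodule.span K {w2 K i}

/-- If `i² = -1`, then `w₁, w₂` are symmetric traceless, `w₁∘w₁ = w₂∘w₂ = 0`,
`w₁∘w₂ = I`, and `J₂ = K·I ⊕ K·w₁ ⊕ K·w₂` is a nontrivial `ℤ₃`-grading of `J₂`. -/
theorem stmt5 {K : Type*} [Field K] (h2 : (2 : K) ≠ 0) (i : K) (hi : i ^ 2 = -1) :
    (w1 K i)ᵀ = w1 K i ∧ (w2 K i)ᵀ = w2 K i ∧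
    Matrix.trace (w1 K i) = 0 ∧ Matrix.trace (w2 K i) = 0 ∧
    jmul (w1 K i) (w1 K i) = 0 ∧ jmul (w2 K i) (w2 K i) = 0 ∧
    jmul (w1 K i) (w2 K i) = 1 ∧
    LinearIndependent K ![(1 : Matrix (Fin 2) (Fin 2) K), w1 K i, w2 K i] ∧
    (∀ x : Matrix (Fin 2) (Fin 2) K, xᵀ = x →
      x ∈ Submodule.span K {(1 : Matrix (Fin 2) (Fin 2) K), w1 K i, w2 K i}) ∧
    (∀ g h : ZMod 3, ∀ x ∈ Agrade K i g, ∀ y ∈ Agrade K i h,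
      jmul x y ∈ Agrade K i (g + h)) ∧
    Agrade K i 0 ≠ symSub K := by
  have half : (2 : K)⁻¹ * 2 = 1 := inv_mul_cancel₀ h2
  have t1 : (w1 K i)ᵀ = w1 K i := by
    ext a b; fin_cases a <;> fin_cases b <;> simp [w1]
  have t2 : (w2 K i)ᵀ = w2 K i := by
    ext a b; fin_cases a <;> fin_cases b <;> simp [w2]
  have j11 : jmul (w1 K i) (w1 K i) = 0 := by
    ext a b; fin_cases a <;> fin_cases b <;>
      simp [w1, jmul, Matrix.mul_apply, Fin.sum_univ_two] <;> grind
  have j22 : jmul (w2 K i) (w2 K i) = 0 := by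
    ext a b; fin_cases a <;> fin_cases b <;>
      simp [w2, jmul, Matrix.mul_apply, Fin.sum_univ_two] <;> grind
  have j12 : jmul (w1 K i) (w2 K i) = 1 := by
    ext a b; fin_cases a <;> fin_cases b <;>
      simp [w1, w2, jmul, Matrix.mul_apply, Fin.sum_univ_two] <;> grind
  have jc : ∀ x y : Matrix (Fin 2) (Fin 2) K, jmul x y = jmul y x := by
    intro x y; simp only [jmul, add_comm]
  have j1 : ∀ x : Matrix (Fin 2) (Fin 2) K, jmul 1 x = x := by
    intro x
    simp only [jmul, one_mul, mul_one]
    rw [← two_smul K x, smul_smul, half, one_smul]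
  have js : ∀ (a b : K) (x y : Matrix (Fin 2) (Fin 2) K),
      jmul (a • x) (b • y) = (a * b) • jmul x y := by
    intro a b x y
    simp only [jmul, Matrix.smul_mul, Matrix.mul_smul]
    module
  have hA0 : Agrade K i 0 = Submodule.span K {1} := by simp [Agrade]
  have hA1 : Agrade K i 1 = Submodule.span K {w1 K i} := by
    have : (1 : ZMod 3) ≠ 0 := by decide
    simp [Agrade]
  have hA2 : Agrade K i 2 = Submodule.span K {w2 K i} := by
    have h : (2 : ZMod 3) ≠ 0 := by decide
    have h' : (2 : ZMod 3) ≠ 1 := by decide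
    simp [Agrade, h, h']
  refine ⟨t1, t2, ?_, ?_, j11, j22, j12, ?_, ?_, ?_, ?_⟩
  · simp [w1, Matrix.trace, Fin.sum_univ_two]
  · simp [w2, Matrix.trace, Fin.sum_univ_two]
  · rw [Fintype.linearIndependent_iff]
    intro g hg
    have h00 := congrFun (congrFun hg 0) 0
    have h01 := congrFun (congrFun hg 0) 1
    have h11 := congrFun (congrFun hg 1) 1
    simp [Fin.sum_univ_three, w1, w2] at h00 h01 h11
    have e0 : g 0 = 0 := by grind
    have e1 : g 1 = 0 := by grind
    have e2 : g 2 = 0 := by grind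
    intro k
    fin_cases k
    exacts [e0, e1, e2]
  · intro x hx
    have hs : x 1 0 = x 0 1 := congrFun (congrFun hx 0) 1
    rw [Submodule.mem_span_triple]
    refine ⟨(2 : K)⁻¹ * (x 0 0 + x 1 1),
      (2 : K)⁻¹ * (x 0 1 - i * ((2 : K)⁻¹ * (x 0 0 - x 1 1))),
      x 0 1 + i * ((2 : K)⁻¹ * (x 0 0 - x 1 1)), ?_⟩
    ext a b; fin_cases a <;> fin_cases b <;> simp [w1, w2] <;> grind
  · intro g h x hx y hy
    have key : ∀ (u v w : Matrix (Fin 2) (Fin 2) K), x ∈ Submodule.span K {u} →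
        y ∈ Submodule.span K {v} → jmul u v ∈ Submodule.span K {w} →
        jmul x y ∈ Submodule.span K {w} := by
      intro u v w hu hv hw
      obtain ⟨a, rfl⟩ := Submodule.mem_span_singleton.1 hu
      obtain ⟨b, rfl⟩ := Submodule.mem_span_singleton.1 hv
      rw [js]
      exact Submodule.smul_mem _ _ hw
    have hz : ∀ g : ZMod 3, g = 0 ∨ g = 1 ∨ g = 2 := by decide
    have a11 : (1 + 1 : ZMod 3) = 2 := by decide
    have a12 : (1 + 2 : ZMod 3) = 0 := by decide
    have a21 : (2 + 1 : ZMod 3) = 0 := by decide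
    have a22 : (2 + 2 : ZMod 3) = 1 := by decide
    have m := fun u : Matrix (Fin 2) (Fin 2) K => Submodule.mem_span_singleton_self (R := K) u
    rcases hz g with rfl | rfl | rfl <;> rcases hz h with rfl | rfl | rfl <;>
      simp only [zero_add, add_zero, a11, a12, a21, a22, hA0, hA1, hA2] at hx hy ⊢ <;>
      refine key _ _ _ hx hy ?_
    · rw [j1]; exact m _
    · rw [j1]; exact m _
    · rw [j1]; exact m _
    · rw [jc, j1]; exact m _
    · rw [j11]; exact Submodule.zero_mem _
    · rw [j12]; exact m _
    · rw [jc, j1]; exact m _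
    · rw [jc, j12]; exact m _
    · rw [j22]; exact Submodule.zero_mem _
  · intro h
    have hw : w1 K i ∈ symSub K := t1
    rw [← h, hA0] at hw
    obtain ⟨a, ha⟩ := Submodule.mem_span_singleton.1 hw
    have := congrFun (congrFun ha 0) 1
    simp [w1] at this
end

section
/- The Jordan algebra J₂ admits a nontrivial ℤ₃-grading — i.e., subspaces A₀, A₁, A₂ with J₂ = A₀ ⊕ A₁ ⊕ A₂, A_g∘A_h ⊆ A_{g+h (mod 3)} for all g,h, and A₀ ≠ J₂ — if and only if −1 is a square in K. -/
open Matrix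

theorem aux_sup {K M : Type*} [Field K] [AddCommGroup M] [Module K M] (A : ZMod 3 → Submodule K M)
    (g : ZMod 3) : (⨆ h, ⨆ _ : h ≠ g, A h) = A (g+1) ⊔ A (g+2) := by
  apply le_antisymm
  · refine iSup_le fun h => iSup_le fun hh => ?_
    have : h = g + 1 ∨ h = g + 2 := by revert h g; decide
    rcases this with rfl | rfl
    · exact le_sup_left
    · exact le_sup_right
  · refine sup_le ?_ ?_
    · exact le_iSup₂_of_le (g+1) (by revert g; decide) le_rfl
    · exact le_iSup₂_of_le (g+2) (by revert g; decide) le_rfl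

theorem aux_sup' {K M : Type*} [Field K] [AddCommGroup M] [Module K M] (A : ZMod 3 → Submodule K M) :
    (⨆ h, A h) = A 0 ⊔ (A 1 ⊔ A 2) := by
  apply le_antisymm
  · refine iSup_le fun h => ?_
    have : h = 0 ∨ h = 1 ∨ h = 2 := by revert h; decide
    rcases this with rfl | rfl | rfl
    · exact le_sup_left
    · exact le_sup_of_le_right le_sup_left
    · exact le_sup_of_le_right le_sup_right
  · exact sup_le (le_iSup A 0) (sup_le (le_iSup A 1) (le_iSup A 2))

theorem aux_ind {K M : Type*} [Field K] [AddCommGroup M] [Module K M] (A : ZMod 3 → Submodule K M)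
    (hA : ∀ g, A g ⊓ (⨆ h, ⨆ _ : h ≠ g, A h) = ⊥) (g : ZMod 3) (p q r : M) (hp : p ∈ A g)
    (hq : q ∈ A (g+1)) (hr : r ∈ A (g+2)) (h : p + q + r = 0) : p = 0 := by
  have h1 := hA g
  rw [aux_sup] at h1
  have : p ∈ A g ⊓ (A (g+1) ⊔ A (g+2)) := by
    refine ⟨hp, ?_⟩
    have h3 : p = -q + -r := by
      have : p = (p + q + r) + (-q + -r) := by abel
      rw [this, h, zero_add]
    rw [h3]
    exact Submodule.add_mem_sup (neg_mem hq) (neg_mem hr)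
  rw [h1] at this
  simpa using this

theorem aux_ind3 {K M : Type*} [Field K] [AddCommGroup M] [Module K M] (A : ZMod 3 → Submodule K M)
    (hA : ∀ g, A g ⊓ (⨆ h, ⨆ _ : h ≠ g, A h) = ⊥) (g : ZMod 3) (p q r : M) (hp : p ∈ A g)
    (hq : q ∈ A (g+1)) (hr : r ∈ A (g+2)) (h : p + q + r = 0) : p = 0 ∧ q = 0 ∧ r = 0 := by
  refine ⟨aux_ind A hA g p q r hp hq hr h, aux_ind A hA (g+1) q r p hq ?_ ?_ ?_,
    aux_ind A hA (g+2) r p q hr ?_ ?_ ?_⟩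
  · convert hr using 2; clear hp hq hr; revert g; decide
  · convert hp using 2; clear hp hq hr; revert g; decide
  · rw [← h]; abel
  · convert hp using 2; clear hp hq hr; revert g; decide
  · convert hq using 2; clear hp hq hr; revert g; decide
  · rw [← h]; abel

theorem jmul_add_right' {K : Type*} [Field K] (x y z : Matrix (Fin 2) (Fin 2) K) :
    jmul x (y + z) = jmul x y + jmul x z := by
  simp only [jmul, ← smul_add, mul_add, add_mul]; congr 1; abel

theorem jmul_add_left' {K : Type*} [Field K] (x y z : Matrix (Fin 2) (Fin 2) K) :
    jmul (y + z) x = jmul y x + jmul z x := by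
  simp only [jmul, ← smul_add, mul_add, add_mul]; congr 1; abel

theorem jmul_self' {K : Type*} [Field K] (h2 : (2 : K) ≠ 0) (x : Matrix (Fin 2) (Fin 2) K) :
    jmul x x = x * x := by
  rw [jmul, ← two_smul K, smul_smul, inv_mul_cancel₀ h2, one_smul]

theorem jmul_one' {K : Type*} [Field K] (h2 : (2 : K) ≠ 0) (x : Matrix (Fin 2) (Fin 2) K) :
    jmul x 1 = x := by
  rw [jmul, mul_one, one_mul, ← two_smul K, smul_smul, inv_mul_cancel₀ h2, one_smul]

theorem one_jmul' {K : Type*} [Field K] (h2 : (2 : K) ≠ 0) (x : Matrix (Fin 2) (Fin 2) K) :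
    jmul 1 x = x := by
  rw [jmul, mul_one, one_mul, ← two_smul K, smul_smul, inv_mul_cancel₀ h2, one_smul]

theorem aux_fwd {K : Type*} [Field K] (h2 : (2 : K) ≠ 0)
    (A : ZMod 3 → Submodule K (Matrix (Fin 2) (Fin 2) K))
    (hs : ∀ g, A g ≤ symSub K)
    (hA : ∀ g, A g ⊓ (⨆ h, ⨆ _ : h ≠ g, A h) = ⊥)
    (hm : ∀ g h, ∀ x ∈ A g, ∀ y ∈ A h, jmul x y ∈ A (g + h))
    (h1 : (1 : Matrix (Fin 2) (Fin 2) K) ∈ A 0)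
    (g : ZMod 3) (hg : g ≠ 0) (x : Matrix (Fin 2) (Fin 2) K) (hx : x ∈ A g) (hx0 : x ≠ 0) :
    IsSquare (-1 : K) := by
  have hxx := hm g g x hx x hx
  rw [jmul_self' h2] at hxx
  have hsx : xᵀ = x := hs g hx
  have hb : x 1 0 = x 0 1 := by
    have := congrFun (congrFun hsx 0) 1
    simpa [Matrix.transpose_apply] using this
  have hCH : x.det • (1 : Matrix (Fin 2) (Fin 2) K) + (-(x.trace)) • x + x * x = 0 := by
    ext i j
    fin_cases i <;> fin_cases j <;>
      simp [Matrix.mul_apply, Fin.sum_univ_two, Matrix.det_fin_two, Matrix.trace_fin_two] <;> ring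
  have key : x.det • (1 : Matrix (Fin 2) (Fin 2) K) = 0 ∧ (-(x.trace)) • x = 0 ∧ x * x = 0 := by
    have hg' : g = 1 ∨ g = 2 := (by decide : ∀ g : ZMod 3, g ≠ 0 → g = 1 ∨ g = 2) g hg
    have e0 := (A 0).smul_mem x.det h1
    have e1 := (A g).smul_mem (-(x.trace)) hx
    rcases hg' with rfl | rfl
    · exact aux_ind3 A hA 0 _ _ _ e0 e1 hxx hCH
    · have := aux_ind3 A hA 0 _ _ _ e0 hxx e1 (by rw [← hCH]; abel)
      exact ⟨this.1, this.2.2, this.2.1⟩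
  obtain ⟨k1, k2, k3⟩ := key
  have t0 : x.trace = 0 := by
    rcases smul_eq_zero.1 k2 with h | h
    · simpa using h
    · exact absurd h hx0
  rw [Matrix.trace_fin_two] at t0
  have s0 := congrFun (congrFun k3 0) 0
  simp only [Matrix.mul_apply, Fin.sum_univ_two, Matrix.zero_apply, hb] at s0
  have hd : x 1 1 = - x 0 0 := by linear_combination t0
  have hne : x 0 1 ≠ 0 := by
    intro h
    apply hx0
    have h00 : x 0 0 = 0 := by
      rw [h] at s0; simpa using s0
    ext i j
    fin_cases i <;> fin_cases j <;> simp [hb, hd, h, h00]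
  refine ⟨x 0 0 / x 0 1, ?_⟩
  field_simp
  linear_combination -s0

theorem aux_one {K : Type*} [Field K] (h2 : (2 : K) ≠ 0)
    (A : ZMod 3 → Submodule K (Matrix (Fin 2) (Fin 2) K))
    (hsup : (⨆ g, A g) = symSub K)
    (hA : ∀ g, A g ⊓ (⨆ h, ⨆ _ : h ≠ g, A h) = ⊥)
    (hm : ∀ g h, ∀ x ∈ A g, ∀ y ∈ A h, jmul x y ∈ A (g + h)) :
    (1 : Matrix (Fin 2) (Fin 2) K) ∈ A 0 := by
  have h1 : (1 : Matrix (Fin 2) (Fin 2) K) ∈ symSub K := Matrix.transpose_one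
  rw [← hsup, aux_sup'] at h1
  obtain ⟨e0, he0, f, hf, hef⟩ := Submodule.mem_sup.1 h1
  obtain ⟨e1, he1, e2, he2, rfl⟩ := Submodule.mem_sup.1 hf
  have key : ∀ g, ∀ x ∈ A g, jmul (e1) x = 0 ∧ jmul e2 x = 0 := by
    intro g x hx
    have a0 := hm 0 g e0 he0 x hx
    have a1 := hm 1 g e1 he1 x hx
    have a2 := hm 2 g e2 he2 x hx
    rw [zero_add] at a0
    rw [add_comm] at a1 a2
    refine (aux_ind3 A hA g _ _ _ (sub_mem a0 hx) a1 a2 ?_).2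
    have := one_jmul' h2 x
    rw [← hef, jmul_add_left', jmul_add_left'] at this
    rw [sub_add_eq_add_sub, sub_add_eq_add_sub, sub_eq_zero, add_assoc, this]
  have z1 : e1 = 0 := by
    rw [← jmul_one' h2 e1, ← hef, jmul_add_right', jmul_add_right', (key 0 e0 he0).1,
      (key 1 e1 he1).1, (key 2 e2 he2).1]; simp
  have z2 : e2 = 0 := by
    rw [← jmul_one' h2 e2, ← hef, jmul_add_right', jmul_add_right', (key 0 e0 he0).2,
      (key 1 e1 he1).2, (key 2 e2 he2).2]; simp
  rw [← hef, z1, z2]; simpa using he0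

/-- generators -/
def gens {K : Type*} [Field K] (i : K) (g : ZMod 3) : Matrix (Fin 2) (Fin 2) K :=
  if g = 0 then 1 else if g = 1 then !![1, i; i, -1] else !![1, -i; -i, -1]

theorem aux_bwd {K : Type*} [Field K] (h2 : (2 : K) ≠ 0) (i : K) (hi : -1 = i * i) :
    ∃ A : ZMod 3 → Submodule K (Matrix (Fin 2) (Fin 2) K),
      (∀ g, A g ≤ symSub K) ∧
      (⨆ g, A g) = symSub K ∧
      (∀ g, A g ⊓ (⨆ h, ⨆ _ : h ≠ g, A h) = ⊥) ∧
      (∀ g h, ∀ x ∈ A g, ∀ y ∈ A h, jmul x y ∈ A (g + h)) ∧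
      A 0 ≠ symSub K := by
  have i0 : i ≠ 0 := by rintro rfl; simp at hi
  have n10 : (1 : ZMod 3) ≠ 0 := by decide
  have n20 : (2 : ZMod 3) ≠ 0 := by decide
  have n21 : (2 : ZMod 3) ≠ 1 := by decide
  have g0 : gens i 0 = 1 := by simp [gens]
  have g1 : gens i 1 = !![1, i; i, -1] := by simp [gens, n10]
  have g2 : gens i 2 = !![1, -i; -i, -1] := by simp [gens, n20, n21]
  have cases3 : ∀ g : ZMod 3, g = 0 ∨ g = 1 ∨ g = 2 := by decide
  have hle : ∀ g, Submodule.span K {gens i g} ≤ symSub K := by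
    intro g
    rw [Submodule.span_singleton_le_iff_mem]
    change (gens i g)ᵀ = gens i g
    rcases cases3 g with rfl | rfl | rfl
    · rw [g0, Matrix.transpose_one]
    · rw [g1]; ext a b; fin_cases a <;> fin_cases b <;> simp
    · rw [g2]; ext a b; fin_cases a <;> fin_cases b <;> simp
  have hlin : ∀ a b c : K, a • gens i 0 + b • gens i 1 + c • gens i 2 = 0 →
      a = 0 ∧ b = 0 ∧ c = 0 := by
    intro a b c h
    rw [g0, g1, g2] at h
    have e00 := congrFun (congrFun h 0) 0
    have e01 := congrFun (congrFun h 0) 1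
    have e11 := congrFun (congrFun h 1) 1
    simp at e00 e01 e11
    have ha : a = 0 := by
      apply (mul_eq_zero.1 (_ : 2 * a = 0)).resolve_left h2
      linear_combination e00 + e11
    have hbc : b - c = 0 := by
      apply (mul_eq_zero.1 (_ : i * (b - c) = 0)).resolve_left i0
      linear_combination e01
    have hb : b = 0 := by
      apply (mul_eq_zero.1 (_ : 2 * b = 0)).resolve_left h2
      linear_combination e00 - ha + hbc
    exact ⟨ha, hb, by linear_combination hb - hbc⟩
  refine ⟨fun g => Submodule.span K {gens i g}, hle, ?_, ?_, ?_, ?_⟩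
  · apply le_antisymm (iSup_le hle)
    intro x hx
    have hsx : xᵀ = x := hx
    have hb : x 1 0 = x 0 1 := by
      have := congrFun (congrFun hsx 0) 1
      simpa [Matrix.transpose_apply] using this
    rw [aux_sup']
    have : x = ((x 0 0 + x 1 1) / 2) • gens i 0 +
        ((((x 0 0 - x 1 1) / 2 + x 0 1 / i) / 2) • gens i 1 +
        (((x 0 0 - x 1 1) / 2 - x 0 1 / i) / 2) • gens i 2) := by
      rw [g0, g1, g2]
      ext a b
      fin_cases a <;> fin_cases b <;> simp [hb] <;> field_simp <;> ring
    rw [this]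
    refine Submodule.add_mem_sup ?_ (Submodule.add_mem_sup ?_ ?_) <;>
    exact Submodule.smul_mem _ _ (Submodule.mem_span_singleton_self _)
  · intro g
    rw [aux_sup, eq_bot_iff]
    rintro x ⟨hx1, hx2⟩
    obtain ⟨a, rfl⟩ := Submodule.mem_span_singleton.1 hx1
    obtain ⟨y, hy, z, hz, hyz⟩ := Submodule.mem_sup.1 hx2
    obtain ⟨b, rfl⟩ := Submodule.mem_span_singleton.1 hy
    obtain ⟨c, rfl⟩ := Submodule.mem_span_singleton.1 hz
    have ha : a = 0 := by
      rcases cases3 g with rfl | rfl | rfl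
      · rw [show (0:ZMod 3) + 1 = 1 from rfl, show (0:ZMod 3) + 2 = 2 from rfl] at hyz
        have := (hlin (-a) b c (by rw [neg_smul, ← hyz]; abel)).1
        simpa using this
      · rw [show (1:ZMod 3) + 1 = 2 from rfl, show (1:ZMod 3) + 2 = 0 from rfl] at hyz
        have := (hlin c (-a) b (by rw [neg_smul, ← hyz]; abel)).2.1
        simpa using this
      · rw [show (2:ZMod 3) + 1 = 0 from rfl, show (2:ZMod 3) + 2 = 1 from rfl] at hyz
        have := (hlin b c (-a) (by rw [neg_smul, ← hyz]; abel)).2.2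
        simpa using this
    simp [ha]
  · intro g h x hx y hy
    obtain ⟨a, rfl⟩ := Submodule.mem_span_singleton.1 hx
    obtain ⟨b, rfl⟩ := Submodule.mem_span_singleton.1 hy
    have hj : jmul (a • gens i g) (b • gens i h) = (a * b) • jmul (gens i g) (gens i h) := by
      simp only [jmul, smul_mul_smul_comm]
      rw [mul_comm b a, ← smul_add, smul_comm]
    rw [hj]
    refine Submodule.smul_mem _ _ ?_
    have s11 : jmul (gens i 1) (gens i 1) = 0 := by
      rw [jmul_self' h2, g1]
      ext a b
      fin_cases a <;> fin_cases b <;> simp [← hi]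
    have s22 : jmul (gens i 2) (gens i 2) = 0 := by
      rw [jmul_self' h2, g2]
      ext a b
      fin_cases a <;> fin_cases b <;> simp [← hi]
    have s12 : jmul (gens i 1) (gens i 2) = (2 : K) • gens i 0 := by
      rw [jmul, g0, g1, g2]
      ext a b
      fin_cases a <;> fin_cases b <;> simp [← hi] <;> field_simp <;> ring
    have s21 : jmul (gens i 2) (gens i 1) = (2 : K) • gens i 0 := by
      rw [← s12, jmul, jmul, add_comm]
    rcases cases3 g with rfl | rfl | rfl
    · rw [g0, one_jmul' h2, zero_add]; exact Submodule.mem_span_singleton_self _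
    · rcases cases3 h with rfl | rfl | rfl
      · rw [g0, jmul_one' h2, add_zero]; exact Submodule.mem_span_singleton_self _
      · rw [s11]; exact zero_mem _
      · rw [s12, show (1:ZMod 3) + 2 = 0 from rfl]
        exact Submodule.smul_mem _ _ (Submodule.mem_span_singleton_self _)
    · rcases cases3 h with rfl | rfl | rfl
      · rw [g0, jmul_one' h2, add_zero]; exact Submodule.mem_span_singleton_self _
      · rw [s21, show (2:ZMod 3) + 1 = 0 from rfl]
        exact Submodule.smul_mem _ _ (Submodule.mem_span_singleton_self _)
      · rw [s22]; exact zero_mem _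
  · intro h
    have h1 : gens i 1 ∈ symSub K := hle 1 (Submodule.mem_span_singleton_self _)
    rw [← h] at h1
    obtain ⟨a, ha⟩ := Submodule.mem_span_singleton.1 h1
    have := (hlin a (-1) 0 (by rw [ha]; simp)).2.1
    simp at this

/-- `J₂` admits a nontrivial `ℤ₃`-grading if and only if `-1` is a square in `K`. -/
theorem stmt7 {K : Type*} [Field K] (h2 : (2 : K) ≠ 0) :
    (∃ A : ZMod 3 → Submodule K (Matrix (Fin 2) (Fin 2) K),
      (∀ g, A g ≤ symSub K) ∧
      (⨆ g, A g) = symSub K ∧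
      (∀ g, A g ⊓ (⨆ h, ⨆ _ : h ≠ g, A h) = ⊥) ∧
      (∀ g h, ∀ x ∈ A g, ∀ y ∈ A h, jmul x y ∈ A (g + h)) ∧
      A 0 ≠ symSub K) ↔ IsSquare (-1 : K) := by
  constructor
  · rintro ⟨A, hs, hsup, hA, hm, hn⟩
    have h1 := aux_one h2 A hsup hA hm
    by_contra hsq
    have hbot : ∀ g, g ≠ 0 → A g = ⊥ := by
      intro g hg
      rw [Submodule.eq_bot_iff]
      intro x hx
      by_contra hx0
      exact hsq (aux_fwd h2 A hs hA hm h1 g hg x hx hx0)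
    apply hn
    rw [← hsup, aux_sup', hbot 1 (by decide), hbot 2 (by decide)]
    simp
  · rintro ⟨i, hi⟩
    exact aux_bwd h2 i hi
end

section
/- For the nonscalar grading of J₂ the following five graded identities hold, for all y₁,y₂,y₃ ∈ J₀, z₁,z₂ ∈ J₁ and x, x₁, x₂, x₃ ∈ J₂: (1) x₁∘(x₂∘x₃) = x₂∘(x₁∘x₃) whenever x₁ and x₂ both lie in J₀ or both lie in J₁; (2) (y₁∘y₂, z₁, z₂) = y₁∘(y₂,z₁,z₂) + y₂∘(y₁,z₁,z₂) − 2·z₁∘(z₂,y₁,y₂); (3) (y₁∘y₂, y₃, z₁) = y₁∘(y₂,y₃,z₁) + y₂∘(y₁,y₃,z₁); (4) (z₁∘z₂, x₁, x₂) = 0; (5) ((y₁,y₂,z₁), x, y₃) = ((y₁,y₃,z₁), x, y₂). -/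
open Matrix

/-- The associator `(x,y,z) = (x∘y)∘z − x∘(y∘z)`. -/
noncomputable def jassoc {K : Type*} [Field K] (x y z : Matrix (Fin 2) (Fin 2) K) :
    Matrix (Fin 2) (Fin 2) K :=
  jmul (jmul x y) z - jmul x (jmul y z)

/-- The matrix `a = e₁₁ − e₂₂`. -/
def amat (K : Type*) [Field K] : Matrix (Fin 2) (Fin 2) K := !![1, 0; 0, -1]

/-- The matrix `b = e₁₂ + e₂₁`. -/
def bmat (K : Type*) [Field K] : Matrix (Fin 2) (Fin 2) K := !![0, 1; 1, 0]

/-- The even part `J₀ = span{I, a}` of the nonscalar grading. -/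
def J0 (K : Type*) [Field K] : Submodule K (Matrix (Fin 2) (Fin 2) K) :=
  Submodule.span K {1, amat K}

/-- The odd part `J₁ = span{b}` of the nonscalar grading. -/
def J1 (K : Type*) [Field K] : Submodule K (Matrix (Fin 2) (Fin 2) K) :=
  Submodule.span K {bmat K}

theorem J0_form {K : Type*} [Field K] {y : Matrix (Fin 2) (Fin 2) K} (h : y ∈ J0 K) :
    ∃ p q : K, y = !![p, 0; 0, q] := by
  obtain ⟨c, d, rfl⟩ := Submodule.mem_span_pair.mp h
  refine ⟨c + d, c - d, ?_⟩
  ext i j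
  fin_cases i <;> fin_cases j <;> simp [amat, sub_eq_add_neg]

theorem J1_form {K : Type*} [Field K] {z : Matrix (Fin 2) (Fin 2) K} (h : z ∈ J1 K) :
    ∃ c : K, z = !![0, c; c, 0] := by
  obtain ⟨c, rfl⟩ := Submodule.mem_span_singleton.mp h
  refine ⟨c, ?_⟩
  ext i j
  fin_cases i <;> fin_cases j <;> simp [bmat]

theorem sym_form {K : Type*} [Field K] {x : Matrix (Fin 2) (Fin 2) K} (h : xᵀ = x) :
    ∃ r s t : K, x = !![r, s; s, t] := by
  refine ⟨x 0 0, x 0 1, x 1 1, ?_⟩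
  have h1 : x 1 0 = x 0 1 := congrFun (congrFun h 0) 1
  ext i j
  fin_cases i <;> fin_cases j <;> simp [h1]

theorem jmul_form {K : Type*} [Field K] (a b c d a' b' c' d' : K) :
    jmul !![a, b; c, d] !![a', b'; c', d'] =
      !![2⁻¹ * (a * a' + b * c' + (a' * a + b' * c)),
         2⁻¹ * (a * b' + b * d' + (a' * b + b' * d));
         2⁻¹ * (c * a' + d * c' + (c' * a + d' * c)),
         2⁻¹ * (c * b' + d * d' + (c' * b + d' * d))] := by
  ext i j
  fin_cases i <;> fin_cases j <;> simp [jmul]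

theorem sub_form {K : Type*} [Field K] (a b c d a' b' c' d' : K) :
    !![a, b; c, d] - !![a', b'; c', d'] = !![a - a', b - b'; c - c', d - d'] := by
  ext i j
  fin_cases i <;> fin_cases j <;> simp

theorem add_form {K : Type*} [Field K] (a b c d a' b' c' d' : K) :
    !![a, b; c, d] + !![a', b'; c', d'] = !![a + a', b + b'; c + c', d + d'] := by
  ext i j
  fin_cases i <;> fin_cases j <;> simp

theorem eq_form {K : Type*} [Field K] {a b c d a' b' c' d' : K} (h1 : a = a') (h2 : b = b')
    (h3 : c = c') (h4 : d = d') : !![a, b; c, d] = !![a', b'; c', d'] := by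
  rw [h1, h2, h3, h4]

theorem zero_form {K : Type*} [Field K] : (0 : Matrix (Fin 2) (Fin 2) K) = !![0, 0; 0, 0] := by
  ext i j
  fin_cases i <;> fin_cases j <;> simp

/-- The five defining graded identities (1)–(5) of the nonscalar grading hold in `J₂`. -/
theorem stmt8 {K : Type*} [Field K] (h2 : (2 : K) ≠ 0) :
    (∀ x₁ x₂ x₃ : Matrix (Fin 2) (Fin 2) K, x₃ᵀ = x₃ →
      ((x₁ ∈ J0 K ∧ x₂ ∈ J0 K) ∨ (x₁ ∈ J1 K ∧ x₂ ∈ J1 K)) →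
      jmul x₁ (jmul x₂ x₃) = jmul x₂ (jmul x₁ x₃)) ∧
    (∀ y₁ ∈ J0 K, ∀ y₂ ∈ J0 K, ∀ z₁ ∈ J1 K, ∀ z₂ ∈ J1 K,
      jassoc (jmul y₁ y₂) z₁ z₂ =
        jmul y₁ (jassoc y₂ z₁ z₂) + jmul y₂ (jassoc y₁ z₁ z₂)
          - 2 • jmul z₁ (jassoc z₂ y₁ y₂)) ∧
    (∀ y₁ ∈ J0 K, ∀ y₂ ∈ J0 K, ∀ y₃ ∈ J0 K, ∀ z₁ ∈ J1 K,
      jassoc (jmul y₁ y₂) y₃ z₁ =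
        jmul y₁ (jassoc y₂ y₃ z₁) + jmul y₂ (jassoc y₁ y₃ z₁)) ∧
    (∀ z₁ ∈ J1 K, ∀ z₂ ∈ J1 K, ∀ x₁ x₂ : Matrix (Fin 2) (Fin 2) K,
      x₁ᵀ = x₁ → x₂ᵀ = x₂ → jassoc (jmul z₁ z₂) x₁ x₂ = 0) ∧
    (∀ y₁ ∈ J0 K, ∀ y₂ ∈ J0 K, ∀ y₃ ∈ J0 K, ∀ z₁ ∈ J1 K,
      ∀ x : Matrix (Fin 2) (Fin 2) K, xᵀ = x →
      jassoc (jassoc y₁ y₂ z₁) x y₃ = jassoc (jassoc y₁ y₃ z₁) x y₂) := by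
  refine ⟨?_, ?_, ?_, ?_, ?_⟩
  · intro x1 x2 x3 hx3 h
    obtain ⟨r3, s3, t3, rfl⟩ := sym_form hx3
    rcases h with ⟨hy1, hy2⟩ | ⟨hz1, hz2⟩
    · obtain ⟨p1, q1, rfl⟩ := J0_form hy1
      obtain ⟨p2, q2, rfl⟩ := J0_form hy2
      simp only [jassoc, jmul_form, sub_form, add_form, two_nsmul, mul_zero, zero_mul, add_zero,
        zero_add, sub_zero, sub_self]
      apply eq_form <;> first | rfl | (field_simp; done) | (field_simp; ring)
    · obtain ⟨c1, rfl⟩ := J1_form hz1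
      obtain ⟨c2, rfl⟩ := J1_form hz2
      simp only [jassoc, jmul_form, sub_form, add_form, two_nsmul, mul_zero, zero_mul, add_zero,
        zero_add, sub_zero, sub_self]
      apply eq_form <;> first | rfl | (field_simp; done) | (field_simp; ring)
  · intro y1 hy1 y2 hy2 z1 hz1 z2 hz2
    obtain ⟨p1, q1, rfl⟩ := J0_form hy1
    obtain ⟨p2, q2, rfl⟩ := J0_form hy2
    obtain ⟨c1, rfl⟩ := J1_form hz1
    obtain ⟨c2, rfl⟩ := J1_form hz2
    simp only [jassoc, jmul_form, sub_form, add_form, two_nsmul, mul_zero, zero_mul, add_zero,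
      zero_add, sub_zero, sub_self]
    apply eq_form <;> first | rfl | (field_simp; done) | (field_simp; ring)
  · intro y1 hy1 y2 hy2 y3 hy3 z1 hz1
    obtain ⟨p1, q1, rfl⟩ := J0_form hy1
    obtain ⟨p2, q2, rfl⟩ := J0_form hy2
    obtain ⟨p3, q3, rfl⟩ := J0_form hy3
    obtain ⟨c1, rfl⟩ := J1_form hz1
    simp only [jassoc, jmul_form, sub_form, add_form, two_nsmul, mul_zero, zero_mul, add_zero,
      zero_add, sub_zero, sub_self]
    apply eq_form <;> first | rfl | (field_simp; done) | (field_simp; ring)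
  · intro z1 hz1 z2 hz2 x1 x2 hx1 hx2
    obtain ⟨c1, rfl⟩ := J1_form hz1
    obtain ⟨c2, rfl⟩ := J1_form hz2
    obtain ⟨r1, s1, t1, rfl⟩ := sym_form hx1
    obtain ⟨r2, s2, t2, rfl⟩ := sym_form hx2
    rw [zero_form]
    simp only [jassoc, jmul_form, sub_form, add_form, two_nsmul, mul_zero, zero_mul, add_zero,
      zero_add, sub_zero, sub_self]
    apply eq_form <;> first | rfl | (field_simp; done) | (field_simp; ring)
  · intro y1 hy1 y2 hy2 y3 hy3 z1 hz1 x hx4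
    obtain ⟨p1, q1, rfl⟩ := J0_form hy1
    obtain ⟨p2, q2, rfl⟩ := J0_form hy2
    obtain ⟨p3, q3, rfl⟩ := J0_form hy3
    obtain ⟨c1, rfl⟩ := J1_form hz1
    obtain ⟨r4, s4, t4, rfl⟩ := sym_form hx4
    simp only [jassoc, jmul_form, sub_form, add_form, two_nsmul, mul_zero, zero_mul, add_zero,
      zero_add, sub_zero, sub_self]
    apply eq_form <;> first | rfl | (field_simp; done) | (field_simp; ring)
end

section
/- For the nonscalar grading of J₂ the following graded identities hold: (a) (x₁,x₂,x₃) = 0 for all x₂ ∈ J₂ whenever x₁ and x₃ both lie in J₀ or both lie in J₁; (b) ((y₁∘z₁), y₂, y₃) = y₁∘(z₁,y₂,y₃) for all y₁,y₂,y₃ ∈ J₀ and z₁ ∈ J₁. -/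
open Matrix

/-- Graded identities: (a) `(x₁,x₂,x₃) = 0` when `x₁, x₃` have the same parity;
(b) `(y₁∘z₁, y₂, y₃) = y₁∘(z₁,y₂,y₃)`. -/
theorem stmt9 {K : Type*} [Field K] (h2 : (2 : K) ≠ 0) :
    (∀ x₁ x₂ x₃ : Matrix (Fin 2) (Fin 2) K, x₂ᵀ = x₂ →
      ((x₁ ∈ J0 K ∧ x₃ ∈ J0 K) ∨ (x₁ ∈ J1 K ∧ x₃ ∈ J1 K)) →
      jassoc x₁ x₂ x₃ = 0) ∧
    (∀ y₁ ∈ J0 K, ∀ y₂ ∈ J0 K, ∀ y₃ ∈ J0 K, ∀ z₁ ∈ J1 K,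
      jassoc (jmul y₁ z₁) y₂ y₃ = jmul y₁ (jassoc z₁ y₂ y₃)) := by
  have e0 : ∀ x ∈ J0 K, ∃ p q : K, x = !![p + q, 0; 0, p - q] := by
    intro x hx
    obtain ⟨p, q, rfl⟩ := Submodule.mem_span_pair.mp hx
    refine ⟨p, q, ?_⟩
    ext i j
    fin_cases i <;> fin_cases j <;> simp [amat, sub_eq_add_neg]
  have e1 : ∀ x ∈ J1 K, ∃ p : K, x = !![0, p; p, 0] := by
    intro x hx
    obtain ⟨p, rfl⟩ := Submodule.mem_span_singleton.mp hx
    refine ⟨p, ?_⟩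
    ext i j
    fin_cases i <;> fin_cases j <;> simp [bmat]
  constructor
  · intro x₁ x₂ x₃ hs h
    have h10 : x₂ 1 0 = x₂ 0 1 := congrFun (congrFun hs 0) 1
    obtain ⟨k, l, m, rfl⟩ : ∃ k l m : K, x₂ = !![k, l; l, m] := by
      refine ⟨x₂ 0 0, x₂ 0 1, x₂ 1 1, ?_⟩
      ext i j
      fin_cases i <;> fin_cases j <;> simp [h10]
    rcases h with ⟨h1, h3⟩ | ⟨h1, h3⟩
    · obtain ⟨p, q, rfl⟩ := e0 _ h1
      obtain ⟨r, s, rfl⟩ := e0 _ h3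
      ext i j
      fin_cases i <;> fin_cases j <;>
        simp [jassoc, jmul] <;> ring
    · obtain ⟨p, rfl⟩ := e1 _ h1
      obtain ⟨r, rfl⟩ := e1 _ h3
      ext i j
      fin_cases i <;> fin_cases j <;>
        simp [jassoc, jmul] <;> ring
  · intro y₁ h1 y₂ h2 y₃ h3 z₁ hz
    obtain ⟨p, q, rfl⟩ := e0 _ h1
    obtain ⟨r, s, rfl⟩ := e0 _ h2
    obtain ⟨t, u, rfl⟩ := e0 _ h3
    obtain ⟨v, rfl⟩ := e1 _ hz
    ext i j
    fin_cases i <;> fin_cases j <;>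
      simp [jassoc, jmul] <;> ring
end

section
/- For the nonscalar grading of J₂: for every k ≥ 1, every z ∈ J₁, every y₁,…,y_{2k} ∈ J₀, and every permutation σ of {1,…,2k}, the left-normed associator satisfies (z, y₁, …, y_{2k}) = (z, y_{σ(1)}, …, y_{σ(2k)}). -/
open Matrix

/-- The left-normed associator `(w, u₁, …, u_{2j}) = ((w, u₁, …, u_{2j−2}), u_{2j−1}, u_{2j})`,
consuming the list of arguments two at a time. -/
noncomputable def leftNormed {K : Type*} [Field K] (w : Matrix (Fin 2) (Fin 2) K) :
    List (Matrix (Fin 2) (Fin 2) K) → Matrix (Fin 2) (Fin 2) K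
  | u₁ :: u₂ :: rest => leftNormed (jassoc w u₁ u₂) rest
  | _ => w

theorem jassoc_odd_even {K : Type*} [Field K] (h2 : (2 : K) ≠ 0)
    (z u v : Matrix (Fin 2) (Fin 2) K) (hz : z ∈ J1 K) (hu : u ∈ J0 K) (hv : v ∈ J0 K) :
    jassoc z u v =
      (-(((u 0 0 - u 1 1) / 2) * ((v 0 0 - v 1 1) / 2))) • z := by
  obtain ⟨t, rfl⟩ := Submodule.mem_span_singleton.1 hz
  obtain ⟨p, q, rfl⟩ := Submodule.mem_span_pair.1 hu
  obtain ⟨r, s, rfl⟩ := Submodule.mem_span_pair.1 hv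
  have hE : ∀ c d : K, c • (1 : Matrix (Fin 2) (Fin 2) K) + d • amat K =
      !![c + d, 0; 0, c - d] := by
    intro c d
    ext i j
    fin_cases i <;> fin_cases j <;> simp [amat, sub_eq_add_neg]
  have hO : t • bmat K = !![0, t; t, 0] := by
    ext i j
    fin_cases i <;> fin_cases j <;> simp [bmat]
  rw [hE, hE, hO]
  ext i j
  fin_cases i <;> fin_cases j <;> simp [jassoc, jmul] <;> field_simp <;> ring

theorem leftNormed_eq_prod {K : Type*} [Field K] (h2 : (2 : K) ≠ 0) (n : ℕ) :
    ∀ (z : Matrix (Fin 2) (Fin 2) K) (l : List (Matrix (Fin 2) (Fin 2) K)),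
      z ∈ J1 K → (∀ u ∈ l, u ∈ J0 K) → l.length = 2 * n →
      leftNormed z l =
        ((-1) ^ n * (l.map (fun u => (u 0 0 - u 1 1) / 2)).prod) • z := by
  induction n with
  | zero =>
    intro z l _ _ hl
    obtain rfl : l = [] := List.length_eq_zero_iff.1 (by omega)
    simp [leftNormed]
  | succ n ih =>
    intro z l hz hl hlen
    match l, hl, hlen with
    | [], _, h => simp at h
    | [_], _, h => simp at h; omega
    | u :: v :: l, hl, h =>
      have e := jassoc_odd_even h2 z u v hz (hl u (by simp)) (hl v (by simp))
      rw [leftNormed, ih _ l (by rw [e]; exact Submodule.smul_mem _ _ hz)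
        (fun w hw => hl w (by simp [hw])) (by simp at h; omega), e, smul_smul]
      congr 1
      simp only [List.map_cons, List.prod_cons]
      ring

/-- For the nonscalar grading, the left-normed associator `(z, y₁, …, y_{2k})` is symmetric
in the even variables: `(z, y₁, …, y_{2k}) = (z, y_{σ(1)}, …, y_{σ(2k)})`. -/
theorem stmt10 {K : Type*} [Field K] (h2 : (2 : K) ≠ 0) (k : ℕ) (hk : 1 ≤ k)
    (z : Matrix (Fin 2) (Fin 2) K) (hz : z ∈ J1 K)
    (y : Fin (2 * k) → Matrix (Fin 2) (Fin 2) K) (hy : ∀ i, y i ∈ J0 K)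
    (σ : Equiv.Perm (Fin (2 * k))) :
    leftNormed z (List.ofFn y) = leftNormed z (List.ofFn (y ∘ σ)) := by
  rw [leftNormed_eq_prod h2 k z _ hz (by simpa [List.mem_ofFn] using hy) (by simp),
    leftNormed_eq_prod h2 k z _ hz
      (by intro u hu; obtain ⟨i, rfl⟩ := (List.mem_ofFn' _ _).1 hu; exact hy _) (by simp)]
  congr 2
  simp only [List.map_ofFn, List.prod_ofFn, Function.comp_apply]
  exact (Equiv.prod_comp σ (fun i => (y i 0 0 - y i 1 1) / 2)).symm
end

section
/- For the nonscalar grading of J₂: for every k ≥ 1, all z₁,z₂ ∈ J₁, all y₁,…,y_{2k+1} ∈ J₀, every permutation σ of {1,…,2k+1}, and every permutation τ of {1,2}, the left-normed associator satisfies (z₁, y₁, …, y_{2k}, z₂, y_{2k+1}) = (z_{τ(1)}, y_{σ(1)}, …, y_{σ(2k)}, z_{τ(2)}, y_{σ(2k+1)}). -/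
open Matrix

theorem aux_zyy {K : Type*} [Field K] (h2 : (2 : K) ≠ 0) (c p q r s : K) :
    jassoc (c • bmat K) (p • 1 + q • amat K) (r • 1 + s • amat K) =
      (-(c * q * s)) • bmat K := by
  ext i j
  fin_cases i <;> fin_cases j <;>
    simp only [jassoc, jmul, Matrix.sub_apply, Matrix.smul_apply, Matrix.add_apply,
      Matrix.mul_apply, Fin.sum_univ_two, smul_eq_mul] <;>
    simp [amat, bmat, Matrix.one_fin_two] <;>
    field_simp <;> ring

theorem aux_zzy {K : Type*} [Field K] (h2 : (2 : K) ≠ 0) (c d r s : K) :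
    jassoc (c • bmat K) (d • bmat K) (r • 1 + s • amat K) =
      (c * d * s) • amat K := by
  ext i j
  fin_cases i <;> fin_cases j <;>
    simp only [jassoc, jmul, Matrix.sub_apply, Matrix.smul_apply, Matrix.add_apply,
      Matrix.mul_apply, Fin.sum_univ_two, smul_eq_mul] <;>
    simp [amat, bmat, Matrix.one_fin_two] <;>
    field_simp <;> ring

theorem aux_left {K : Type*} [Field K] (h2 : (2 : K) ≠ 0) (k : ℕ) :
    ∀ (c : K) (p q : Fin (2 * k) → K),
      leftNormed (c • bmat K) (List.ofFn fun i => p i • 1 + q i • amat K) =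
        ((-1) ^ k * c * ∏ i, q i) • bmat K := by
  induction k with
  | zero => intro c p q; simp [leftNormed]
  | succ k ih =>
    intro c p q
    change Fin (2 * k + 1 + 1) → K at p q
    change leftNormed (c • bmat K)
      (List.ofFn fun i : Fin (2 * k + 1 + 1) => p i • 1 + q i • amat K) =
        ((-1) ^ (k + 1) * c * ∏ i : Fin (2 * k + 1 + 1), q i) • bmat K
    rw [List.ofFn_succ, List.ofFn_succ, leftNormed, aux_zyy h2,
      ih _ (fun i => p i.succ.succ) (fun i => q i.succ.succ),
      Fin.prod_univ_succ, Fin.prod_univ_succ]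
    congr 1
    ring

/-- For the nonscalar grading:
`(z₁, y₁, …, y_{2k}, z₂, y_{2k+1}) = (z_{τ(1)}, y_{σ(1)}, …, y_{σ(2k)}, z_{τ(2)}, y_{σ(2k+1)})`
for all permutations `σ` of the even variables and `τ` of the odd variables. -/
theorem stmt11 {K : Type*} [Field K] (h2 : (2 : K) ≠ 0) (k : ℕ) (hk : 1 ≤ k)
    (z : Fin 2 → Matrix (Fin 2) (Fin 2) K) (hz : ∀ i, z i ∈ J1 K)
    (y : Fin (2 * k + 1) → Matrix (Fin 2) (Fin 2) K) (hy : ∀ i, y i ∈ J0 K)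
    (σ : Equiv.Perm (Fin (2 * k + 1))) (τ : Equiv.Perm (Fin 2)) :
    jassoc (leftNormed (z 0) (List.ofFn fun i : Fin (2 * k) => y i.castSucc))
        (z 1) (y (Fin.last (2 * k))) =
      jassoc (leftNormed (z (τ 0)) (List.ofFn fun i : Fin (2 * k) => y (σ i.castSucc)))
        (z (τ 1)) (y (σ (Fin.last (2 * k)))) := by
  have hz' : ∀ i, ∃ c : K, z i = c • bmat K := fun i => by
    obtain ⟨c, hc⟩ := Submodule.mem_span_singleton.1 (hz i)
    exact ⟨c, hc.symm⟩
  have hy' : ∀ i, ∃ p q : K, y i = p • 1 + q • amat K := fun i => by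
    obtain ⟨p, q, h⟩ := Submodule.mem_span_pair.1 (hy i)
    exact ⟨p, q, h.symm⟩
  choose c hc using hz'
  choose p q hpq using hy'
  simp only [hc, hpq]
  rw [aux_left h2 k _ (fun i => p i.castSucc) (fun i => q i.castSucc),
    aux_left h2 k _ (fun i => p (σ i.castSucc)) (fun i => q (σ i.castSucc)),
    aux_zzy h2, aux_zzy h2]
  congr 1
  have e1 := Fin.prod_univ_castSucc q
  have e2 := Fin.prod_univ_castSucc (fun i => q (σ i))
  rw [Equiv.prod_comp σ q] at e2
  have e3 := Equiv.prod_comp τ c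
  rw [Fin.prod_univ_two, Fin.prod_univ_two] at e3
  rw [e1] at e2
  linear_combination (-1) ^ k * (c 0 * c 1) * e2 -
    (-1) ^ k * (∏ i : Fin (2 * k), q (σ i.castSucc)) * q (σ (Fin.last (2 * k))) * e3
end

section
/- For the nonscalar grading of J₂ the following graded identities hold for all y₁,y₂,y₃ ∈ J₀ and z₁,z₂ ∈ J₁: (y₁,y₂,z₁)∘z₂ = (y₁,y₂,z₂)∘z₁ and (y₁,y₂,z₁)∘(z₂∘y₃) = (y₁,y₂,z₂)∘(y₃∘z₁). -/
open Matrix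

/-- For the nonscalar grading: `(y₁,y₂,z₁)∘z₂ = (y₁,y₂,z₂)∘z₁` and
`(y₁,y₂,z₁)∘(z₂∘y₃) = (y₁,y₂,z₂)∘(y₃∘z₁)`. -/
theorem stmt12 {K : Type*} [Field K] (h2 : (2 : K) ≠ 0) :
    (∀ y₁ ∈ J0 K, ∀ y₂ ∈ J0 K, ∀ z₁ ∈ J1 K, ∀ z₂ ∈ J1 K,
      jmul (jassoc y₁ y₂ z₁) z₂ = jmul (jassoc y₁ y₂ z₂) z₁) ∧
    (∀ y₁ ∈ J0 K, ∀ y₂ ∈ J0 K, ∀ y₃ ∈ J0 K, ∀ z₁ ∈ J1 K, ∀ z₂ ∈ J1 K,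
      jmul (jassoc y₁ y₂ z₁) (jmul z₂ y₃) = jmul (jassoc y₁ y₂ z₂) (jmul y₃ z₁)) := by
  have hl : ∀ (c : K) (x y : Matrix (Fin 2) (Fin 2) K), jmul (c • x) y = c • jmul x y := by
    intro c x y
    simp only [jmul, smul_mul_assoc, mul_smul_comm, ← smul_add]
    rw [smul_comm]
  have hc : ∀ (x y : Matrix (Fin 2) (Fin 2) K), jmul x y = jmul y x := by
    intro x y
    simp only [jmul, add_comm]
  have hr : ∀ (c : K) (x y : Matrix (Fin 2) (Fin 2) K), jmul x (c • y) = c • jmul x y := by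
    intro c x y
    rw [hc, hl, hc]
  have ha : ∀ (c : K) (x y z : Matrix (Fin 2) (Fin 2) K),
      jassoc x y (c • z) = c • jassoc x y z := by
    intro c x y z
    simp only [jassoc, hr, smul_sub]
  constructor
  · intro y₁ _ y₂ _ z₁ hz₁ z₂ hz₂
    obtain ⟨c, rfl⟩ := Submodule.mem_span_singleton.1 hz₁
    obtain ⟨d, rfl⟩ := Submodule.mem_span_singleton.1 hz₂
    rw [ha, ha, hl, hl, hr, hr, smul_comm]
  · intro y₁ _ y₂ _ y₃ _ z₁ hz₁ z₂ hz₂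
    obtain ⟨c, rfl⟩ := Submodule.mem_span_singleton.1 hz₁
    obtain ⟨d, rfl⟩ := Submodule.mem_span_singleton.1 hz₂
    rw [hc y₃, ha, ha, hl, hl, hl, hl, hr, hr, smul_comm]
end

section
/- The subset S = {0, a, −a, b, −b} of J₂ is closed under the associator: for all x, y, z ∈ S one has (x,y,z) ∈ S. Consequently, substituting a for every even variable and b for every odd variable in any iterated associator built from graded variables yields 0, ±a or ±b. -/
open Matrix

/-- The iterated associators built from the generators `a` (for even variables) and
`b` (for odd variables). -/
inductive AssocGen (K : Type*) [Field K] : Matrix (Fin 2) (Fin 2) K → Prop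
  | base_a : AssocGen K (amat K)
  | base_b : AssocGen K (bmat K)
  | assoc (x y z : Matrix (Fin 2) (Fin 2) K) :
      AssocGen K x → AssocGen K y → AssocGen K z → AssocGen K (jassoc x y z)

/-- The set `S = {0, a, −a, b, −b}` is closed under the associator; consequently every
iterated associator evaluated with `a` for even variables and `b` for odd variables
equals `0`, `±a` or `±b`. -/
theorem stmt14 {K : Type*} [Field K] (h2 : (2 : K) ≠ 0) :
    (∀ x ∈ ({0, amat K, -amat K, bmat K, -bmat K} : Set (Matrix (Fin 2) (Fin 2) K)),
     ∀ y ∈ ({0, amat K, -amat K, bmat K, -bmat K} : Set (Matrix (Fin 2) (Fin 2) K)),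
     ∀ z ∈ ({0, amat K, -amat K, bmat K, -bmat K} : Set (Matrix (Fin 2) (Fin 2) K)),
      jassoc x y z ∈
        ({0, amat K, -amat K, bmat K, -bmat K} : Set (Matrix (Fin 2) (Fin 2) K))) ∧
    (∀ w : Matrix (Fin 2) (Fin 2) K, AssocGen K w →
      w ∈ ({0, amat K, -amat K, bmat K, -bmat K} : Set (Matrix (Fin 2) (Fin 2) K))) := by
  have haa : jmul (amat K) (amat K) = 1 := by
    ext i j; fin_cases i <;> fin_cases j <;> simp [jmul, amat] <;> field_simp <;> norm_num
  have hbb : jmul (bmat K) (bmat K) = 1 := by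
    ext i j; fin_cases i <;> fin_cases j <;> simp [jmul, bmat] <;> field_simp <;> norm_num
  have hab : jmul (amat K) (bmat K) = 0 := by
    ext i j; fin_cases i <;> fin_cases j <;> simp [jmul, amat, bmat]
  have hba : jmul (bmat K) (amat K) = 0 := by
    ext i j; fin_cases i <;> fin_cases j <;> simp [jmul, amat, bmat]
  have h1x : ∀ x : Matrix (Fin 2) (Fin 2) K, jmul 1 x = x := by
    intro x; simp [jmul, ← two_smul K x, smul_smul, h2]
  have hx1 : ∀ x : Matrix (Fin 2) (Fin 2) K, jmul x 1 = x := by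
    intro x; simp [jmul, ← two_smul K x, smul_smul, h2]
  have h0x : ∀ x : Matrix (Fin 2) (Fin 2) K, jmul 0 x = 0 := by
    intro x; simp [jmul]
  have hx0 : ∀ x : Matrix (Fin 2) (Fin 2) K, jmul x 0 = 0 := by
    intro x; simp [jmul]
  have hnx : ∀ x y : Matrix (Fin 2) (Fin 2) K, jmul (-x) y = -jmul x y := by
    intro x y; simp only [jmul, neg_mul, mul_neg, ← neg_add, smul_neg]
  have hxn : ∀ x y : Matrix (Fin 2) (Fin 2) K, jmul x (-y) = -jmul x y := by
    intro x y; simp only [jmul, neg_mul, mul_neg, ← neg_add, smul_neg]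
  have key : ∀ x ∈ ({0, amat K, -amat K, bmat K, -bmat K} : Set (Matrix (Fin 2) (Fin 2) K)),
     ∀ y ∈ ({0, amat K, -amat K, bmat K, -bmat K} : Set (Matrix (Fin 2) (Fin 2) K)),
     ∀ z ∈ ({0, amat K, -amat K, bmat K, -bmat K} : Set (Matrix (Fin 2) (Fin 2) K)),
      jassoc x y z ∈
        ({0, amat K, -amat K, bmat K, -bmat K} : Set (Matrix (Fin 2) (Fin 2) K)) := by
    intro x hx y hy z hz
    simp only [Set.mem_insert_iff, Set.mem_singleton_iff] at hx hy hz ⊢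
    rcases hx with rfl | rfl | rfl | rfl | rfl <;>
    rcases hy with rfl | rfl | rfl | rfl | rfl <;>
    rcases hz with rfl | rfl | rfl | rfl | rfl <;>
    simp [jassoc, haa, hbb, hab, hba, h1x, hx1, h0x, hx0, hnx, hxn]
  refine ⟨key, ?_⟩
  intro w hw
  induction hw with
  | base_a => simp
  | base_b => simp
  | assoc x y z _ _ _ ihx ihy ihz => exact key x ihx y ihy z ihz
end

section
/- Let V be an n-dimensional K-vector space with a symmetric bilinear form ⟨·,·⟩, and let x₁, …, x_{2n+1} ∈ V. Then the alternating sum over all permutations σ of {1,…,n+1} vanishes: Σ_σ sgn(σ) · (∏_{j=2}^{n+1} ⟨x_{n+j}, x_{σ(j)}⟩) · x_{σ(1)} = 0. (This says that the polynomial f_n = Σ_σ (−1)^σ x_{σ(1)}(x_{n+2}x_{σ(2)})⋯(x_{2n+1}x_{σ(n+1)}) is a weak identity for the pair (Bₙ, Vₙ).) -/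
/-- For an `n`-dimensional space `V` with a symmetric bilinear form and any
`x₁, …, x_{2n+1} ∈ V`, the alternating sum
`Σ_σ sgn(σ) (∏_{j=2}^{n+1} ⟨x_{n+j}, x_{σ(j)}⟩) x_{σ(1)}` vanishes; i.e. the polynomial
`f_n` is a weak identity for the pair `(Bₙ, Vₙ)`. -/
theorem stmt16 {K V : Type*} [Field K] [AddCommGroup V] [Module K V]
    [FiniteDimensional K V] (n : ℕ) (hdim : Module.finrank K V = n)
    (b : V →ₗ[K] V →ₗ[K] K) (hsymm : ∀ u v : V, b u v = b v u)
    (x : Fin (2 * n + 1) → V) :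
    ∑ σ : Equiv.Perm (Fin (n + 1)),
      (Equiv.Perm.sign σ : ℤ) •
        ((∏ j : Fin n,
            b (x ⟨n + 1 + (j : ℕ), by omega⟩)
              (x (Fin.castLE (by omega) (σ j.succ)))) •
          x (Fin.castLE (by omega) (σ 0))) = 0 := by
  let L : V →ₗ[K] MultilinearMap K (fun _ : Fin n => V) V :=
    { toFun := fun v => ((MultilinearMap.mkPiAlgebra K (Fin n) K).compLinearMap
        (fun j => b (x ⟨n + 1 + (j : ℕ), by omega⟩))).smulRight v
      map_add' := fun v w => by ext m; simp [smul_add]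
      map_smul' := fun c v => by ext m; simp [smul_comm c] }
  let F : MultilinearMap K (fun _ : Fin (n + 1) => V) V :=
    LinearMap.uncurryLeft (M := fun _ : Fin (n + 1) => V) L
  let y : Fin (n + 1) → V := fun i => x (Fin.castLE (by omega) i)
  have hy : ¬ LinearIndependent K y := by
    intro h
    have := h.fintype_card_le_finrank
    simp [hdim] at this
  have h := (MultilinearMap.alternatization F).map_linearDependent y hy
  rw [MultilinearMap.alternatization_apply] at h
  rw [← h]
  refine Finset.sum_congr rfl fun σ _ => ?_
  rw [Units.smul_def]
  congr 1
end

section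
/- For all symmetric traceless 2×2 matrices z₁, z₂, z₃, z₄, z₅ over K: Σ_{σ ∈ S₃} sgn(σ) · ((z_{σ(1)} ∘ (z₄ ∘ z_{σ(2)})) ∘ (z₅ ∘ z_{σ(3)})) = 0, where σ ranges over the permutations of {1,2,3}. (This is the graded identity Σ (−1)^σ z_{σ(1)}(z₄z_{σ(2)})(z₅z_{σ(3)}) for the scalar ℤ₂-grading of J₂, whose even part is K·I and whose odd part is the space of traceless symmetric matrices.) -/
open Matrix

theorem form_aux {K : Type*} [Field K] (z : Matrix (Fin 2) (Fin 2) K)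
    (h : zᵀ = z) (t : Matrix.trace z = 0) : ∃ a b : K, z = !![a, b; b, -a] := by
  refine ⟨z 0 0, z 0 1, ?_⟩
  have h1 : z 1 0 = z 0 1 := by
    have := congrFun (congrFun h 0) 1
    simpa [Matrix.transpose_apply] using this
  have h3 : z 1 1 = - z 0 0 := by
    rw [Matrix.trace_fin_two] at t
    linear_combination t
  ext i j
  fin_cases i <;> fin_cases j <;> simp [h1, h3]

theorem jmul_aux {K : Type*} [Field K] (h2 : (2 : K) ≠ 0) (a b c d : K) :
    jmul !![a, b; b, -a] !![c, d; d, -c] = (a * c + b * d) • (1 : Matrix (Fin 2) (Fin 2) K) := by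
  ext i j
  fin_cases i <;> fin_cases j <;> simp [jmul, h2] <;> field_simp <;> ring_nf

theorem jmul_smul_one_aux {K : Type*} [Field K] (h2 : (2 : K) ≠ 0) (c : K)
    (x : Matrix (Fin 2) (Fin 2) K) : jmul x (c • 1) = c • x := by
  ext i j
  simp [jmul]
  field_simp
  ring

/-- The graded identity `Σ_{σ∈S₃} (−1)^σ z_{σ(1)}(z₄ z_{σ(2)})(z₅ z_{σ(3)}) = 0` for the
scalar `ℤ₂`-grading of `J₂`: it holds for all symmetric traceless matrices `z₁,…,z₅`. -/
theorem stmt17 {K : Type*} [Field K] (h2 : (2 : K) ≠ 0)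
    (z₁ z₂ z₃ z₄ z₅ : Matrix (Fin 2) (Fin 2) K)
    (h₁ : z₁ᵀ = z₁) (h₂ : z₂ᵀ = z₂) (h₃ : z₃ᵀ = z₃) (h₄ : z₄ᵀ = z₄) (h₅ : z₅ᵀ = z₅)
    (t₁ : Matrix.trace z₁ = 0) (t₂ : Matrix.trace z₂ = 0) (t₃ : Matrix.trace z₃ = 0)
    (t₄ : Matrix.trace z₄ = 0) (t₅ : Matrix.trace z₅ = 0) :
    ∑ σ : Equiv.Perm (Fin 3),
      (Equiv.Perm.sign σ : ℤ) •
        jmul (jmul (![z₁, z₂, z₃] (σ 0)) (jmul z₄ (![z₁, z₂, z₃] (σ 1))))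
          (jmul z₅ (![z₁, z₂, z₃] (σ 2))) = 0 := by
  obtain ⟨a₁, b₁, rfl⟩ := form_aux z₁ h₁ t₁
  obtain ⟨a₂, b₂, rfl⟩ := form_aux z₂ h₂ t₂
  obtain ⟨a₃, b₃, rfl⟩ := form_aux z₃ h₃ t₃
  obtain ⟨a₄, b₄, rfl⟩ := form_aux z₄ h₄ t₄
  obtain ⟨a₅, b₅, rfl⟩ := form_aux z₅ h₅ t₅
  clear h₁ h₂ h₃ h₄ h₅ t₁ t₂ t₃ t₄ t₅
  have hz : ∀ i : Fin 3, ![!![a₁, b₁; b₁, -a₁], !![a₂, b₂; b₂, -a₂], !![a₃, b₃; b₃, -a₃]] i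
      = !![![a₁, a₂, a₃] i, ![b₁, b₂, b₃] i; ![b₁, b₂, b₃] i, -(![a₁, a₂, a₃] i)] := by
    intro i
    fin_cases i <;> rfl
  simp only [hz, jmul_aux h2, jmul_smul_one_aux h2]
  ext i j
  simp only [Matrix.sum_apply, Matrix.smul_apply, Matrix.zero_apply]
  have key : ∀ f : Fin 3 → Fin 3 → Fin 3 → K,
      ∑ σ : Equiv.Perm (Fin 3), (Equiv.Perm.sign σ : ℤ) • f (σ 0) (σ 1) (σ 2)
        = f 0 1 2 - f 0 2 1 - f 1 0 2 + f 1 2 0 + f 2 0 1 - f 2 1 0 := by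
    intro f
    have e0 : (Equiv.Perm.decomposeFin.symm ((0 : Fin 3), Equiv.swap (0 : Fin 2) 1)) 2 = 1 := by
      decide
    have e1 : (Equiv.Perm.decomposeFin.symm ((1 : Fin 3), Equiv.swap (0 : Fin 2) 1)) 2 = 0 := by
      decide
    have e2 : (Equiv.Perm.decomposeFin.symm ((2 : Fin 3), Equiv.swap (0 : Fin 2) 1)) 2 = 1 := by
      decide
    simp [Finset.univ_perm_fin_succ, ← Finset.univ_product_univ, Finset.sum_product,
      Fin.sum_univ_succ, Equiv.Perm.decomposeFin.symm_sign, Fin.succ_ne_zero, Equiv.swap_apply_def, e0, e1, e2]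
    ring
  rw [key (fun p q r => (a₅ * ![a₁, a₂, a₃] r + b₅ * ![b₁, b₂, b₃] r) •
    (a₄ * ![a₁, a₂, a₃] q + b₄ * ![b₁, b₂, b₃] q) •
    (!![![a₁, a₂, a₃] p, ![b₁, b₂, b₃] p; ![b₁, b₂, b₃] p, -(![a₁, a₂, a₃] p)] i j))]
  fin_cases i <;> fin_cases j <;> simp <;> ring
end

section
/- Let K be an infinite field of characteristic ≠ 2, n ≥ 1, and consider the polynomial ring K[t_{ij}] in commuting variables t_{ij}, i = 1, 2, …, j = 1, …, n. For indices i, i' set t_i∘t_{i'} = Σ_{k=1}^{n} t_{ik} t_{i'k}, and let R be the K-subalgebra of K[t_{ij}] generated by all t_i∘t_{i'}. For a double row (p₁ … p_m | q₁ … q_m) of positive integers set φ = det((t_{p_a}∘t_{q_b})_{1≤a,b≤m}), and for a double tableau T with rows of weakly decreasing lengths m₁ ≥ m₂ ≥ … ≥ m_k set φ(T) = the product of the φ's of its rows. Call T doubly standard if in each row p_{i1} < p_{i2} < … < p_{im_i} and q_{i1} < q_{i2} < … < q_{im_i}, and p_{ij} ≤ q_{ij} and q_{ij} ≤ p_{i+1,j}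 for all i, j. Then the polynomials φ(T), where T ranges over all doubly standard tableaux of positive integers with first-row length m₁ ≤ n, form a basis of R as a K-vector space. -/
open MvPolynomial

/-- The inner product `t_i ∘ t_{i'} = Σ_{k} t_{ik} t_{i'k}` in the polynomial ring
`K[t_{ij}]` (the row indices `i` range over `ℕ`, the column indices over `Fin n`). -/
noncomputable def tpair (n : ℕ) (K : Type*) [Field K] (i i' : ℕ) :
    MvPolynomial (ℕ × Fin n) K :=
  ∑ k : Fin n, X (i, k) * X (i', k)

/-- The subalgebra `R = K[(t_i ∘ t_{i'})]` generated by all the inner products. -/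
noncomputable def Rsub (n : ℕ) (K : Type*) [Field K] :
    Subalgebra K (MvPolynomial (ℕ × Fin n) K) :=
  Algebra.adjoin K (Set.range fun p : ℕ × ℕ => tpair n K p.1 p.2)

/-- A double row `(p₁ … p_m | q₁ … q_m)` of a double tableau. -/
structure DRow where
  m : ℕ
  p : Fin m → ℕ
  q : Fin m → ℕ

/-- The polynomial of a double row: `det ((t_{p_a} ∘ t_{q_b}))`. -/
noncomputable def rowPoly (n : ℕ) (K : Type*) [Field K] (r : DRow) :
    MvPolynomial (ℕ × Fin n) K :=
  Matrix.det (Matrix.of fun a b : Fin r.m => tpair n K (r.p a) (r.q b))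

/-- The polynomial of a double tableau: the product of the polynomials of its rows. -/
noncomputable def tabPoly (n : ℕ) (K : Type*) [Field K] (T : List DRow) :
    MvPolynomial (ℕ × Fin n) K :=
  (T.map (rowPoly n K)).prod

/-- A double tableau is doubly standard if its row lengths weakly decrease, each row is
strictly increasing in both halves, `p_{ij} ≤ q_{ij}`, and `q_{ij} ≤ p_{i+1,j}`. -/
def DoublyStandard (T : List DRow) : Prop :=
  List.Chain' (fun r s => s.m ≤ r.m) T ∧
  (∀ r ∈ T, StrictMono r.p ∧ StrictMono r.q) ∧
  (∀ r ∈ T, ∀ j, r.p j ≤ r.q j) ∧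
  List.Chain' (fun r s => ∀ (j : Fin s.m) (hj : (j : ℕ) < r.m), r.q ⟨j, hj⟩ ≤ s.p j) T


/-! ### Part 1: linear independence -/

section LinIndep

lemma sum_id_le_sum_inj (m : ℕ) (κ : Fin m → ℕ) (hκ : Function.Injective κ) :
    ∑ b : Fin m, (b : ℕ) ≤ ∑ b, κ b := by
  induction m with
  | zero => simp
  | succ m ih =>
    obtain ⟨c, -, hc⟩ := Finset.exists_max_image (Finset.univ : Finset (Fin (m+1))) κ
      ⟨0, Finset.mem_univ _⟩
    rw [Fin.sum_univ_succAbove κ c, Fin.sum_univ_castSucc]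
    have h1 := ih (fun i => κ (c.succAbove i))
      (fun a b h => Fin.succAbove_right_injective (hκ h))
    have h2 : m ≤ κ c := by
      have : (Finset.univ.image κ) ⊆ Finset.range (κ c + 1) := by
        intro x hx
        simp only [Finset.mem_image, Finset.mem_univ, true_and] at hx
        obtain ⟨y, rfl⟩ := hx
        have := hc y (Finset.mem_univ _)
        simp; omega
      have := Finset.card_le_card this
      rw [Finset.card_image_of_injective _ hκ] at this
      simp at this
      omega
    simp only [Fin.val_castSucc, Fin.val_last]
    omega

lemma sum_weight_le (m : ℕ) (κ : Fin m → ℕ) (hκ : Function.Injective κ) (a : Fin m → ℤ)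
    (ha : StrictAnti a) (hpos : ∀ i, 0 < a i) :
    ∑ b : Fin m, a b * (b : ℤ) ≤ ∑ b, a b * (κ b : ℤ) ∧
    (∑ b, a b * (κ b : ℤ) = ∑ b : Fin m, a b * (b : ℤ) → ∀ b, κ b = b) := by
  induction m with
  | zero => simp
  | succ m ih =>
    have key : ∀ f : Fin (m+1) → ℕ, ∑ b, a b * (f b : ℤ) =
        a (Fin.last m) * ((∑ b, f b : ℕ) : ℤ) +
          ∑ b : Fin m, (a b.castSucc - a (Fin.last m)) * (f b.castSucc : ℤ) := by
      intro f
      rw [Fin.sum_univ_castSucc, Fin.sum_univ_castSucc]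
      push_cast
      simp only [sub_mul, Finset.sum_sub_distrib, ← Finset.mul_sum]
      ring
    have k1 := key (fun b => (b : ℕ))
    have k2 := key κ
    rw [k1, k2]
    obtain ⟨h1, h2⟩ := ih (fun b => κ b.castSucc)
      (fun x y h => Fin.castSucc_injective m (hκ h))
      (fun b => a b.castSucc - a (Fin.last m))
      (fun x y h => by
        have := ha (Fin.castSucc_lt_castSucc_iff.mpr h)
        simp only; omega)
      (fun i => by
        have := ha (Fin.castSucc_lt_last i)
        omega)
    have h3 := sum_id_le_sum_inj (m+1) κ hκ
    have h3' : ((∑ b : Fin (m+1), (b : ℕ) : ℕ) : ℤ) ≤ ((∑ b, κ b : ℕ) : ℤ) := by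
      exact_mod_cast h3
    have hp := hpos (Fin.last m)
    have h4 := mul_le_mul_of_nonneg_left h3' hp.le
    simp only [Fin.val_castSucc] at *
    refine ⟨by linarith, fun h => ?_⟩
    have h5 : ∑ b : Fin m, (a b.castSucc - a (Fin.last m)) * (κ b.castSucc : ℤ) =
        ∑ b : Fin m, (a b.castSucc - a (Fin.last m)) * (b : ℤ) := by linarith
    have h6 := h2 h5
    have h7 : a (Fin.last m) * ((∑ b, κ b : ℕ) : ℤ) =
        a (Fin.last m) * ((∑ b : Fin (m+1), (b : ℕ) : ℕ) : ℤ) := by linarith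
    have h8 := mul_left_cancel₀ hp.ne' h7
    have h9 : ∑ b, κ b = ∑ b : Fin (m+1), (b : ℕ) := by exact_mod_cast h8
    rw [Fin.sum_univ_castSucc, Fin.sum_univ_castSucc] at h9
    simp only [h6, Fin.val_castSucc] at h9
    intro b
    refine Fin.lastCases ?_ ?_ b
    · simpa using h9
    · intro i; simpa using h6 i

variable {n : ℕ} {K : Type*} [Field K]

/-- weight of an exponent -/
noncomputable def wt (n C : ℕ) : ((ℕ × Fin n) →₀ ℕ) →+ ℤ :=
  Finsupp.liftAddHom (fun x : ℕ × Fin n =>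
    ((AddMonoidHom.mulRight (((C : ℤ) - x.1) * (x.2 : ℕ))).comp (Nat.castAddMonoidHom ℤ)))

lemma wt_single (C : ℕ) (x : ℕ × Fin n) (c : ℕ) :
    wt n C (Finsupp.single x c) = c * (((C : ℤ) - x.1) * (x.2 : ℕ)) := by
  simp [wt]

/-- leading exponent -/
def Lead (C : ℕ) (f : MvPolynomial (ℕ × Fin n) K) (d : (ℕ × Fin n) →₀ ℕ) : Prop :=
  coeff d f = 1 ∧ ∀ e, coeff e f ≠ 0 → wt n C d ≤ wt n C e ∧ (wt n C e = wt n C d → e = d)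

lemma Lead.one (C : ℕ) : Lead C (1 : MvPolynomial (ℕ × Fin n) K) 0 := by
  classical
  refine ⟨by simp, fun e he => ?_⟩
  rw [coeff_one] at he
  have : 0 = e := by by_contra h; simp [h] at he
  subst this; simp

lemma Lead.mul {C : ℕ} {f g : MvPolynomial (ℕ × Fin n) K} {d d' : (ℕ × Fin n) →₀ ℕ}
    (hf : Lead C f d) (hg : Lead C g d') : Lead C (f * g) (d + d') := by
  classical
  constructor
  · rw [coeff_mul, Finset.sum_eq_single (d, d')]
    · simp [hf.1, hg.1]
    · rintro ⟨x, y⟩ hxy hne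
      by_contra h
      have hx := hf.2 x (left_ne_zero_of_mul h)
      have hy := hg.2 y (right_ne_zero_of_mul h)
      rw [Finset.HasAntidiagonal.mem_antidiagonal] at hxy
      have := congrArg (wt n C) hxy
      simp only [map_add] at this
      apply hne
      rw [hx.2 (by linarith), hy.2 (by linarith)]
    · intro h; simp at h
  · intro e he
    rw [coeff_mul] at he
    obtain ⟨⟨x, y⟩, hxy, h⟩ := Finset.exists_ne_zero_of_sum_ne_zero he
    have hx := hf.2 x (left_ne_zero_of_mul h)
    have hy := hg.2 y (right_ne_zero_of_mul h)
    rw [Finset.HasAntidiagonal.mem_antidiagonal] at hxy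
    simp only at hxy
    subst hxy
    simp only [map_add]
    refine ⟨by linarith, fun h => ?_⟩
    rw [hx.2 (by linarith), hy.2 (by linarith)]

/-- exponent of `∏ t_{p_b, κ_b}` -/
noncomputable def expo {m : ℕ} (p : Fin m → ℕ) (κ : Fin m → Fin n) : (ℕ × Fin n) →₀ ℕ :=
  ∑ b, Finsupp.single (p b, κ b) 1

lemma prod_X_expo {m : ℕ} (p : Fin m → ℕ) (κ : Fin m → Fin n) :
    ∏ b, (X (p b, κ b) : MvPolynomial (ℕ × Fin n) K) = monomial (expo p κ) 1 := by
  rw [expo, monomial_sum_one]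
  rfl

lemma wt_expo (C : ℕ) {m : ℕ} (p : Fin m → ℕ) (κ : Fin m → Fin n) :
    wt n C (expo p κ) = ∑ b, ((C : ℤ) - p b) * ((κ b : ℕ) : ℤ) := by
  simp [expo, wt_single]

lemma rowPoly_expand (r : DRow) :
    rowPoly n K r = ∑ κ : Fin r.m → Fin n,
      (Matrix.of fun a b : Fin r.m => (X (r.p a, κ b) : MvPolynomial (ℕ × Fin n) K)).det *
        ∏ b, X (r.q b, κ b) := by
  rw [rowPoly, Matrix.det_apply']
  simp only [Matrix.of_apply, tpair, Finset.prod_univ_sum, Fintype.piFinset_univ, Finset.mul_sum]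
  rw [Finset.sum_comm]
  refine Finset.sum_congr rfl fun κ _ => ?_
  rw [Matrix.det_apply', Finset.sum_mul]
  refine Finset.sum_congr rfl fun τ _ => ?_
  rw [Finset.prod_mul_distrib]
  simp [mul_assoc]

lemma rowPoly_expand' (r : DRow) :
    rowPoly n K r = ∑ κ : Fin r.m → Fin n, ∑ τ : Equiv.Perm (Fin r.m),
      if Function.Injective κ then
        monomial (expo (r.p ∘ τ) κ + expo r.q κ) (((Equiv.Perm.sign τ : ℤ) : K)) else 0 := by
  rw [rowPoly_expand]
  refine Finset.sum_congr rfl fun κ _ => ?_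
  by_cases h : Function.Injective κ
  · simp only [h, if_true]
    rw [Matrix.det_apply', Finset.sum_mul]
    refine Finset.sum_congr rfl fun τ _ => ?_
    simp only [Matrix.of_apply]
    rw [prod_X_expo r.q κ]
    have := prod_X_expo (K := K) (r.p ∘ τ) κ
    simp only [Function.comp_apply] at this
    rw [this, mul_assoc, monomial_mul, ← map_intCast (C : K →+* MvPolynomial (ℕ × Fin n) K),
      C_mul_monomial]
    simp
  · simp only [h, if_false, Finset.sum_const_zero]
    simp only [Function.Injective, not_forall] at h
    obtain ⟨a, b, hab, hne⟩ := h
    rw [Matrix.det_zero_of_column_eq hne, zero_mul]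
    intro i; simp [hab]

lemma rowPoly_zero_of_lt (r : DRow) (h : n < r.m) : rowPoly n K r = 0 := by
  rw [rowPoly_expand']
  refine Finset.sum_eq_zero fun κ _ => Finset.sum_eq_zero fun τ _ => ?_
  rw [if_neg]
  intro hi
  have := Fintype.card_le_of_injective κ hi
  simp at this; omega

/-- leading exponent of a row -/
noncomputable def rowE (n : ℕ) (r : DRow) : (ℕ × Fin n) →₀ ℕ :=
  if h : r.m ≤ n then expo r.p (Fin.castLE h) + expo r.q (Fin.castLE h) else 0

lemma weight_row (C : ℕ) {m : ℕ} (p : Fin m → ℕ) (hp : StrictMono p) (hC : ∀ j, p j < C)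
    (h : m ≤ n) (κ : Fin m → Fin n) (hκ : Function.Injective κ) (τ : Equiv.Perm (Fin m)) :
    wt n C (expo p (Fin.castLE h)) ≤ wt n C (expo (p ∘ τ) κ) ∧
    (wt n C (expo (p ∘ τ) κ) = wt n C (expo p (Fin.castLE h)) → ∀ b, (κ b : ℕ) = τ b) := by
  have h1 := sum_weight_le m (fun b => (κ (τ.symm b) : ℕ))
    (fun x y hxy => τ.symm.injective (hκ (Fin.ext hxy))) (fun b => (C : ℤ) - p b)
    (fun x y hxy => by have := hp hxy; simp only; omega)
    (fun i => by have := hC i; omega)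
  have h2 : wt n C (expo (p ∘ τ) κ) =
      ∑ b, ((C : ℤ) - p b) * ((κ (τ.symm b) : ℕ) : ℤ) := by
    rw [wt_expo, ← Equiv.sum_comp τ (fun b => ((C : ℤ) - p b) * ((κ (τ.symm b) : ℕ) : ℤ))]
    simp
  rw [h2, wt_expo]
  simp only [Fin.val_castLE]
  refine ⟨h1.1, fun h b => ?_⟩
  have := h1.2 h (τ b)
  simpa using this

lemma Lead.row (C : ℕ) (r : DRow) (h : r.m ≤ n) (hp : StrictMono r.p) (hq : StrictMono r.q)
    (hpC : ∀ j, r.p j < C) (hqC : ∀ j, r.q j < C) : Lead C (rowPoly n K r) (rowE n r) := by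
  classical
  have hE : rowE n r = expo r.p (Fin.castLE h) + expo r.q (Fin.castLE h) := by
    rw [rowE, dif_pos h]
  have main : ∀ (κ : Fin r.m → Fin n) (τ : Equiv.Perm (Fin r.m)), Function.Injective κ →
      wt n C (rowE n r) ≤ wt n C (expo (r.p ∘ τ) κ + expo r.q κ) ∧
      (wt n C (expo (r.p ∘ τ) κ + expo r.q κ) = wt n C (rowE n r) →
        κ = Fin.castLE h ∧ τ = 1) := by
    intro κ τ hκ
    have h1 := weight_row C r.p hp hpC h κ hκ τ
    have h2 := weight_row C r.q hq hqC h κ hκ 1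
    have h3 : r.q ∘ (1 : Equiv.Perm (Fin r.m)) = r.q := rfl
    rw [h3] at h2
    rw [hE, map_add, map_add]
    refine ⟨by linarith [h1.1, h2.1], fun heq => ?_⟩
    have e1 := h1.2 (by linarith [h1.1, h2.1])
    have e2 := h2.2 (by linarith [h1.1, h2.1])
    constructor
    · ext b; simpa using e2 b
    · ext b
      have := e1 b
      rw [e2 b] at this
      simpa using this.symm
  constructor
  · rw [rowPoly_expand']
    simp only [coeff_sum]
    rw [Finset.sum_eq_single (Fin.castLE h), Finset.sum_eq_single 1]
    · rw [if_pos (Fin.castLE_injective h), coeff_monomial, if_pos]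
      · simp
      · rw [hE]; rfl
    · intro τ _ hτ
      rw [if_pos (Fin.castLE_injective h), coeff_monomial, if_neg]
      intro heq
      exact hτ ((main _ τ (Fin.castLE_injective h)).2 (by rw [heq])).2
    · simp
    · intro κ _ hκ
      refine Finset.sum_eq_zero fun τ _ => ?_
      split_ifs with hi
      · rw [coeff_monomial, if_neg]
        intro heq
        exact hκ ((main _ τ hi).2 (by rw [heq])).1
      · simp
    · simp
  · intro e he
    rw [rowPoly_expand'] at he
    simp only [coeff_sum] at he
    obtain ⟨κ, _, he⟩ := Finset.exists_ne_zero_of_sum_ne_zero he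
    obtain ⟨τ, _, he⟩ := Finset.exists_ne_zero_of_sum_ne_zero he
    split_ifs at he with hi
    · rw [coeff_monomial] at he
      split_ifs at he with heq
      · subst heq
        refine ⟨(main κ τ hi).1, fun hw => ?_⟩
        obtain ⟨rfl, rfl⟩ := (main κ τ hi).2 hw
        rw [hE]; rfl
      · exact absurd rfl he
    · simp at he

/-- leading exponent of a tableau -/
noncomputable def tabE (n : ℕ) (T : List DRow) : (ℕ × Fin n) →₀ ℕ := (T.map (rowE n)).sum

lemma Lead.tab (C : ℕ) (T : List DRow)
    (h : ∀ r ∈ T, r.m ≤ n ∧ StrictMono r.p ∧ StrictMono r.q ∧ (∀ j, r.p j < C) ∧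
      (∀ j, r.q j < C)) : Lead C (tabPoly n K T) (tabE n T) := by
  induction T with
  | nil => exact Lead.one C
  | cons r T ih =>
    simp only [tabPoly, tabE, List.map_cons, List.prod_cons, List.sum_cons]
    obtain ⟨h1, h2, h3, h4, h5⟩ := h r (by simp)
    exact (Lead.row C r h1 h2 h3 h4 h5).mul (ih fun s hs => h s (by simp [hs]))

/-- column `k` of a row -/
def colr (k : ℕ) (r : DRow) : List ℕ :=
  if h : k < r.m then [r.p ⟨k, h⟩, r.q ⟨k, h⟩] else []

/-- column `k` of a tableau -/
def colT (k : ℕ) (T : List DRow) : List ℕ := T.flatMap (colr k)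

lemma expo_apply {m : ℕ} (p : Fin m → ℕ) (h : m ≤ n) (i : ℕ) (k : Fin n) :
    expo p (Fin.castLE h) (i, k) =
      if hk : (k : ℕ) < m then (if p ⟨k, hk⟩ = i then 1 else 0) else 0 := by
  classical
  simp only [expo, Finsupp.finsetSum_apply, Finsupp.single_apply, Prod.mk.injEq]
  split_ifs with hk hp
  · rw [Finset.sum_eq_single ⟨k, hk⟩]
    · rw [if_pos ⟨hp, by ext; simp⟩]
    · intro b _ hb
      rw [if_neg]
      rintro ⟨_, h2⟩
      apply hb
      ext
      simpa using congrArg Fin.val h2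
    · simp
  · refine Finset.sum_eq_zero fun b _ => ?_
    rw [if_neg]
    rintro ⟨h1, h2⟩
    have : b = ⟨k, hk⟩ := by
      ext
      simpa using congrArg Fin.val h2
    subst this
    exact hp h1
  · refine Finset.sum_eq_zero fun b _ => ?_
    rw [if_neg]
    rintro ⟨h1, h2⟩
    have := congrArg Fin.val h2
    simp at this
    omega

lemma rowE_apply (r : DRow) (h : r.m ≤ n) (i : ℕ) (k : Fin n) :
    rowE n r (i, k) = (colr k r).count i := by
  rw [rowE, dif_pos h, Finsupp.add_apply, expo_apply, expo_apply, colr]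
  split_ifs <;> simp_all

lemma tabE_apply (T : List DRow) (h : ∀ r ∈ T, r.m ≤ n) (i : ℕ) (k : Fin n) :
    tabE n T (i, k) = (colT k T).count i := by
  induction T with
  | nil => simp [tabE, colT]
  | cons r T ih =>
    have ih' := ih (fun s hs => h s (by simp [hs]))
    simp only [tabE, colT, List.map_cons, List.sum_cons, List.flatMap_cons, List.count_append,
      Finsupp.add_apply] at *
    rw [ih', rowE_apply r (h r (by simp))]

lemma DoublyStandard.tail {r : DRow} {T : List DRow} (h : DoublyStandard (r :: T)) :
    DoublyStandard T :=
  ⟨h.1.tail, fun s hs => h.2.1 s (by simp [hs]), fun s hs => h.2.2.1 s (by simp [hs]),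
    h.2.2.2.tail⟩

lemma colT_nil_of_le (k : ℕ) (r : DRow) (T : List DRow) (h : DoublyStandard (r :: T))
    (hk : r.m ≤ k) : colT k (r :: T) = [] := by
  induction T generalizing r with
  | nil => simp [colT, colr, hk]
  | cons s T ih =>
    have h1 := List.isChain_cons_cons.mp h.1
    have := ih s h.tail (h1.1.trans hk)
    simp only [colT, List.flatMap_cons] at *
    rw [this]
    simp [colr, hk]

lemma colT_sorted (k : ℕ) (T : List DRow) (h : DoublyStandard T) :
    (colT k T).Pairwise (· ≤ ·) := by
  induction T with
  | nil => simp [colT]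
  | cons r T ih =>
    have ih' := ih h.tail
    by_cases hk : k < r.m
    · have e : colT k (r :: T) = r.p ⟨k, hk⟩ :: r.q ⟨k, hk⟩ :: colT k T := by
        simp [colT, colr, hk]
      have hpq := h.2.2.1 r (by simp) ⟨k, hk⟩
      have hq : ∀ x ∈ colT k T, r.q ⟨k, hk⟩ ≤ x := by
        cases T with
        | nil => simp [colT]
        | cons s T =>
          by_cases hk' : k < s.m
          · have e' : colT k (s :: T) = s.p ⟨k, hk'⟩ :: s.q ⟨k, hk'⟩ :: colT k T := by
              simp [colT, colr, hk']
            have h4 := List.isChain_cons_cons.mp h.2.2.2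
            have h5 := h4.1 ⟨k, hk'⟩ hk
            rw [e'] at ih' ⊢
            intro x hx
            rcases List.mem_cons.mp hx with rfl | hx
            · exact h5
            · exact h5.trans ((List.pairwise_cons.mp ih').1 x hx)
          · rw [colT_nil_of_le k s T h.tail (by omega)]
            simp
      rw [e, List.pairwise_cons, List.pairwise_cons]
      refine ⟨?_, hq, ih'⟩
      intro x hx
      rcases List.mem_cons.mp hx with rfl | hx
      · exact hpq
      · exact hpq.trans (hq x hx)
    · rw [colT_nil_of_le k r T h (by omega)]
      simp

lemma colT_inj (T T' : List DRow) (h : DoublyStandard T) (h' : DoublyStandard T')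
    (hm : ∀ r ∈ T, 1 ≤ r.m ∧ r.m ≤ n) (hm' : ∀ r ∈ T', 1 ≤ r.m ∧ r.m ≤ n)
    (hc : ∀ k < n, colT k T = colT k T') : T = T' := by
  induction T generalizing T' with
  | nil =>
    cases T' with
    | nil => rfl
    | cons r T' =>
      obtain ⟨h1, h2⟩ := hm' r (by simp)
      have := hc 0 (by omega)
      have h3 : 0 < r.m := h1
      simp [colT, colr, h3] at this
  | cons r T ih =>
    cases T' with
    | nil =>
      obtain ⟨h1, h2⟩ := hm r (by simp)
      have := hc 0 (by omega)
      have h3 : 0 < r.m := h1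
      simp [colT, colr, h3] at this
    | cons r' T' =>
      obtain ⟨h1, h2⟩ := hm r (by simp)
      obtain ⟨h1', h2'⟩ := hm' r' (by simp)
      have e : r.m = r'.m := by
        by_contra hne
        rcases Nat.lt_or_gt_of_ne hne with hlt | hlt
        · have := hc r.m (by omega)
          rw [colT_nil_of_le _ r T h le_rfl] at this
          simp [colT, colr, hlt] at this
        · have := hc r'.m (by omega)
          rw [colT_nil_of_le _ r' T' h' le_rfl] at this
          simp [colT, colr, hlt] at this
      obtain ⟨m, p, q⟩ := r
      obtain ⟨m', p', q'⟩ := r'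
      simp only at e h2 h1
      subst e
      have hk : ∀ k, (hk : k < m) → p ⟨k, hk⟩ = p' ⟨k, hk⟩ ∧ q ⟨k, hk⟩ = q' ⟨k, hk⟩ := by
        intro k hk
        have := hc k (by omega)
        simp [colT, colr, hk] at this
        exact ⟨this.1, this.2.1⟩
      have hp : p = p' := funext fun k => (hk k k.2).1
      have hq : q = q' := funext fun k => (hk k k.2).2
      subst hp hq
      congr 1
      refine ih T' h.tail h'.tail (fun s hs => hm s (by simp [hs]))
        (fun s hs => hm' s (by simp [hs])) fun k hkn => ?_
      have := hc k hkn
      simp only [colT, List.flatMap_cons] at this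
      exact List.append_cancel_left this

lemma tabE_inj (T T' : List DRow) (h : DoublyStandard T) (h' : DoublyStandard T')
    (hm : ∀ r ∈ T, 1 ≤ r.m ∧ r.m ≤ n) (hm' : ∀ r ∈ T', 1 ≤ r.m ∧ r.m ≤ n)
    (hE : tabE n T = tabE n T') : T = T' := by
  refine colT_inj T T' h h' hm hm' fun k hk => ?_
  refine List.Perm.eq_of_pairwise' (colT_sorted k T h) (colT_sorted k T' h') ?_
  rw [List.perm_iff_count]
  intro i
  rw [← tabE_apply T (fun r hr => (hm r hr).2) i ⟨k, hk⟩,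
    ← tabE_apply T' (fun r hr => (hm' r hr).2) i ⟨k, hk⟩, hE]

lemma exists_bound (T : List DRow) : ∃ C, ∀ r ∈ T, (∀ j, r.p j < C) ∧ (∀ j, r.q j < C) := by
  induction T with
  | nil => exact ⟨0, by simp⟩
  | cons r T ih =>
    obtain ⟨C, hC⟩ := ih
    refine ⟨C + (∑ j, r.p j) + (∑ j, r.q j) + 1, fun s hs => ?_⟩
    rcases List.mem_cons.mp hs with rfl | hs
    · constructor
      · intro j
        have := Finset.single_le_sum (f := s.p) (fun i _ => Nat.zero_le _) (Finset.mem_univ j)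
        omega
      · intro j
        have := Finset.single_le_sum (f := s.q) (fun i _ => Nat.zero_le _) (Finset.mem_univ j)
        omega
    · exact ⟨fun j => by have := (hC s hs).1 j; omega, fun j => by have := (hC s hs).2 j; omega⟩

theorem part1 : LinearIndependent K
      (fun T : {T : List DRow // DoublyStandard T ∧ ∀ r ∈ T, 1 ≤ r.m ∧ r.m ≤ n} =>
        tabPoly n K T.1) := by
  classical
  rw [linearIndependent_iff']
  intro s g hg
  by_contra hcon
  push Not at hcon
  obtain ⟨T0, hT0, hgT0⟩ := hcon
  choose B hB using fun T : {T : List DRow // DoublyStandard T ∧ ∀ r ∈ T, 1 ≤ r.m ∧ r.m ≤ n} =>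
    exists_bound T.1
  let C := s.sup B
  have hlead : ∀ T ∈ s, Lead C (tabPoly n K T.1) (tabE n T.1) := by
    intro T hT
    refine Lead.tab C T.1 fun r hr => ⟨(T.2.2 r hr).2, (T.2.1.2.1 r hr).1, (T.2.1.2.1 r hr).2,
      fun j => lt_of_lt_of_le ((hB T r hr).1 j) (Finset.le_sup (f := B) hT),
      fun j => lt_of_lt_of_le ((hB T r hr).2 j) (Finset.le_sup (f := B) hT)⟩
  obtain ⟨T, hT, hmin⟩ := Finset.exists_min_image (s.filter fun T => g T ≠ 0)
    (fun T => wt n C (tabE n T.1)) ⟨T0, by simp [hT0, hgT0]⟩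
  rw [Finset.mem_filter] at hT
  apply hT.2
  have h1 := congrArg (coeff (tabE n T.1)) hg
  rw [coeff_sum, Finset.sum_eq_single T] at h1
  · simpa [(hlead T hT.1).1] using h1
  · intro T' hT' hne
    rw [coeff_smul, smul_eq_mul]
    by_contra h0
    have hg' := left_ne_zero_of_mul h0
    have hc' := right_ne_zero_of_mul h0
    have h2 := (hlead T' hT').2 _ hc'
    have h3 := hmin T' (by simp [hT', hg'])
    have h4 := h2.2 (le_antisymm h3 h2.1)
    exact hne (Subtype.ext (tabE_inj T'.1 T.1 T'.2.1 T.2.1 T'.2.2 T.2.2 h4.symm))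
  · intro h; exact absurd hT.1 h

end LinIndep

/-! ### Part 2: exchange relations -/

section Relations

lemma sum_group {G H A : Type*} [Group G] [Fintype G] [Group H] [Fintype H] [AddCommGroup A]
    (ρ : H →* G) (hρ : Function.Injective ρ) (f : G → A) (hf : ∀ g h, f (g * ρ h) = f g) :
    ∃ y ∈ Submodule.span ℤ {x | ∃ g, g ∉ ρ.range ∧ x = f g},
      ∑ g, f g = Fintype.card H • (f 1 + y) := by
  classical
  have hfib : ∀ c : G ⧸ ρ.range, ∑ g with (QuotientGroup.mk g : G ⧸ ρ.range) = c, f g =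
      Fintype.card H • f c.out := by
    intro c
    have himg : (Finset.univ.filter fun g : G => (QuotientGroup.mk g : G ⧸ ρ.range) = c) =
        Finset.univ.image (fun h : H => c.out * ρ h) := by
      ext g
      simp only [Finset.mem_filter, Finset.mem_univ, true_and, Finset.mem_image]
      constructor
      · intro hg
        have h1 : (QuotientGroup.mk c.out : G ⧸ ρ.range) = QuotientGroup.mk g := by
          rw [hg, QuotientGroup.out_eq']
        rw [QuotientGroup.eq] at h1
        obtain ⟨h, hh⟩ := h1
        exact ⟨h, by rw [hh]; group⟩
      · rintro ⟨h, rfl⟩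
        rw [QuotientGroup.mk_mul_of_mem _ (⟨h, rfl⟩ : ρ h ∈ ρ.range), QuotientGroup.out_eq']
    rw [himg, Finset.sum_image]
    · simp [hf]
    · intro a _ b _ hab
      exact hρ (mul_left_cancel hab)
  rw [← Finset.sum_fiberwise Finset.univ (fun g : G => (QuotientGroup.mk g : G ⧸ ρ.range)) f]
  simp only [hfib]
  rw [← Finset.smul_sum, ← Finset.add_sum_erase _ _ (Finset.mem_univ (QuotientGroup.mk (1 : G) : G ⧸ ρ.range))]
  refine ⟨∑ c ∈ Finset.univ.erase (QuotientGroup.mk (1 : G) : G ⧸ ρ.range), f c.out, ?_, ?_⟩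
  rotate_left
  · congr 2
    have : (QuotientGroup.mk (QuotientGroup.mk (1 : G) : G ⧸ ρ.range).out : G ⧸ ρ.range) =
        QuotientGroup.mk 1 := by
      rw [QuotientGroup.out_eq']
    rw [eq_comm, QuotientGroup.eq] at this
    obtain ⟨h, hh⟩ := this
    have h2 := hf 1 h
    rw [hh] at h2
    simpa using h2
  · refine Submodule.sum_mem _ fun c hc => Submodule.subset_span ⟨c.out, ?_, rfl⟩
    intro hmem
    apply Finset.ne_of_mem_erase hc
    rw [← QuotientGroup.out_eq' c, eq_comm, QuotientGroup.eq]
    simpa using hmem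

lemma exch_sum {α β : Type*} [Fintype α] [Fintype β] [DecidableEq α] [DecidableEq β]
    (z : α ⊕ β → ℕ) (c : ℕ) (h1 : ∀ a, z (Sum.inl a) ≤ c) (h2 : ∀ b, c < z (Sum.inr b))
    (σ : Equiv.Perm (α ⊕ β)) (hσ : σ ∉ (Equiv.Perm.sumCongrHom α β).range) :
    ∑ b, z (σ (Sum.inr b)) < ∑ b, z (Sum.inr b) := by
  let g : α ⊕ β → ℤ := fun x => (z x : ℤ) - c
  have hg1 : ∀ a, g (Sum.inl a) ≤ 0 := fun a => by have := h1 a; simp only [g]; omega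
  have hg2 : ∀ b, 0 < g (Sum.inr b) := fun b => by have := h2 b; simp only [g]; omega
  suffices h : ∑ b, g (σ (Sum.inr b)) < ∑ b, g (Sum.inr b) by
    simp only [g, Finset.sum_sub_distrib] at h
    have h' : ∑ b, (z (σ (Sum.inr b)) : ℤ) < ∑ b, (z (Sum.inr b) : ℤ) := by linarith
    exact_mod_cast h'
  let B : Finset (α ⊕ β) := Finset.univ.image Sum.inr
  let B' : Finset (α ⊕ β) := Finset.univ.image (fun b => σ (Sum.inr b))
  have e1 : ∑ b, g (Sum.inr b) = ∑ x ∈ B, g x := by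
    rw [Finset.sum_image]; intro a _ b _ h; exact Sum.inr_injective h
  have e2 : ∑ b, g (σ (Sum.inr b)) = ∑ x ∈ B', g x := by
    rw [Finset.sum_image]; intro a _ b _ h; exact Sum.inr_injective (σ.injective h)
  rw [e1, e2, ← Finset.sum_inter_add_sum_sdiff B' B]
  have e3 : ∑ x ∈ B' \ B, g x ≤ 0 := by
    refine Finset.sum_nonpos fun x hx => ?_
    rw [Finset.mem_sdiff] at hx
    rcases x with a | b
    · exact hg1 a
    · exact absurd (by simp [B]) hx.2
  have e4 : ∑ x ∈ B' ∩ B, g x < ∑ x ∈ B, g x := by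
    have hex : ∃ b, (Sum.inr b : α ⊕ β) ∉ B' := by
      by_contra hcon
      push Not at hcon
      apply hσ
      apply Equiv.Perm.mem_sumCongrHom_range_of_perm_mapsTo_inl
      rintro _ ⟨a, rfl⟩
      rcases hx : σ (Sum.inl a) with a' | b
      · exact ⟨a', rfl⟩
      · have := hcon b
        simp only [B', Finset.mem_image, Finset.mem_univ, true_and] at this
        obtain ⟨b', hb'⟩ := this
        rw [← hx] at hb'
        exact absurd (σ.injective hb') (by simp)
    obtain ⟨b, hb⟩ := hex
    refine Finset.sum_lt_sum_of_subset Finset.inter_subset_right (i := Sum.inr b)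
      (by simp [B]) (by simp [hb]) (hg2 b) ?_
    intro x hx _
    simp only [B, Finset.mem_image, Finset.mem_univ, true_and] at hx
    obtain ⟨b', rfl⟩ := hx
    exact (hg2 b').le
  linarith

lemma antisym {α β A : Type*} [Fintype α] [Fintype β] [DecidableEq α] [DecidableEq β]
    [CommRing A] (F : (α ⊕ β → ℕ) → A)
    (hF : ∀ z (h1 : Equiv.Perm α) (h2 : Equiv.Perm β), F (z ∘ Sum.map h1 h2) =
      ((Equiv.Perm.sign h1 : ℤ) : A) * ((Equiv.Perm.sign h2 : ℤ) : A) * F z) (z : α ⊕ β → ℕ) :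
    ∃ y ∈ Submodule.span ℤ {x | ∃ σ : Equiv.Perm (α ⊕ β),
        σ ∉ (Equiv.Perm.sumCongrHom α β).range ∧ x = F (z ∘ σ)},
      ∑ σ : Equiv.Perm (α ⊕ β), ((Equiv.Perm.sign σ : ℤ) : A) * F (z ∘ σ) =
        Fintype.card (Equiv.Perm α × Equiv.Perm β) • (F z + y) := by
  obtain ⟨y, hy, h⟩ := sum_group (Equiv.Perm.sumCongrHom α β)
    Equiv.Perm.sumCongrHom_injective
    (fun σ => ((Equiv.Perm.sign σ : ℤ) : A) * F (z ∘ σ)) (by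
      rintro g ⟨h1, h2⟩
      have e : z ∘ (g * (Equiv.Perm.sumCongrHom α β) (h1, h2)) = (z ∘ g) ∘ Sum.map h1 h2 := by
        ext x; rcases x with a | b <;> simp
      rw [e, hF]
      simp only [Equiv.Perm.sign_mul, Equiv.Perm.sumCongrHom_apply, Equiv.Perm.sign_sumCongr]
      rcases Int.units_eq_one_or (Equiv.Perm.sign h1) with e1 | e1 <;>
      rcases Int.units_eq_one_or (Equiv.Perm.sign h2) with e2 | e2 <;> simp [e1, e2])
  refine ⟨y, ?_, ?_⟩
  · refine Submodule.span_le.mpr ?_ hy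
    rintro _ ⟨σ, hσ, rfl⟩
    rcases Int.units_eq_one_or (Equiv.Perm.sign σ) with e1 | e1
    · exact Submodule.subset_span ⟨σ, hσ, by simp [e1]⟩
    · have e2 : ((Equiv.Perm.sign σ : ℤ) : A) * F (z ∘ σ) = - F (z ∘ σ) := by simp [e1]
      simp only [e2]
      exact Submodule.neg_mem _ (Submodule.subset_span ⟨σ, hσ, rfl⟩)
  · rw [h]; simp

/-- replace the entries of `p` at positions in `S` by `z` -/
def ext' {m : ℕ} (S : Fin m → Prop) [DecidablePred S] (p : Fin m → ℕ) (z : {a // S a} → ℕ) :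
    Fin m → ℕ := fun a => if h : S a then z ⟨a, h⟩ else p a

section
variable {m : ℕ} (S : Fin m → Prop) [DecidablePred S] (p : Fin m → ℕ)

lemma ext'_pos (z : {a // S a} → ℕ) (a : {a // S a}) : ext' S p z a = z a := by
  simp [ext', a.2]

lemma ext'_neg (z : {a // S a} → ℕ) (a : {a // ¬ S a}) : ext' S p z a = p a := by
  simp [ext', a.2]

lemma ext'_self : ext' S p (fun a => p a) = p := by
  ext a; simp [ext']

lemma ext'_comp (z : {a // S a} → ℕ) (h : Equiv.Perm {a // S a}) :
    ext' S p (z ∘ h) = ext' S p z ∘ (Equiv.Perm.ofSubtype h) := by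
  ext a
  by_cases ha : S a
  · have h1 := ext'_pos S p (z ∘ h) ⟨a, ha⟩
    have h2 := ext'_pos S p z (h ⟨a, ha⟩)
    simp only [Function.comp_apply] at *
    rw [h1, Equiv.Perm.ofSubtype_apply_of_mem h ha, h2]
  · simp [ext', ha, Equiv.Perm.ofSubtype_apply_of_not_mem h ha]

lemma ext'_sum (z : {a // S a} → ℕ) :
    ∑ a, ext' S p z a + ∑ a : {a // S a}, p a = ∑ a, p a + ∑ a, z a := by
  rw [← Fintype.sum_subtype_add_sum_subtype S (ext' S p z),
    ← Fintype.sum_subtype_add_sum_subtype S p]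
  simp only [ext'_pos, ext'_neg]
  omega
end

variable {A : Type*} [CommRing A]

/-- determinant of a pairing -/
def dt (s : ℕ → ℕ → A) {m : ℕ} (p q : Fin m → ℕ) : A :=
  Matrix.det (Matrix.of fun a b : Fin m => s (p a) (q b))

/-- row polynomial for a general pairing -/
def rp (s : ℕ → ℕ → A) (r : DRow) : A := dt s r.p r.q

/-- tableau polynomial for a general pairing -/
def tp (s : ℕ → ℕ → A) (T : List DRow) : A := (T.map (rp s)).prod

lemma dt_expand (s : ℕ → ℕ → A) {m : ℕ} (p q : Fin m → ℕ) :
    dt s p q = ∑ τ : Equiv.Perm (Fin m), ((Equiv.Perm.sign τ : ℤ) : A) *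
      ∏ i, s (p (τ i)) (q i) := by
  rw [dt, Matrix.det_apply']; rfl

lemma dt_perm_left (s : ℕ → ℕ → A) {m : ℕ} (p q : Fin m → ℕ) (τ : Equiv.Perm (Fin m)) :
    dt s (p ∘ τ) q = ((Equiv.Perm.sign τ : ℤ) : A) * dt s p q :=
  Matrix.det_permute τ (Matrix.of fun a b : Fin m => s (p a) (q b))

lemma dt_perm_right (s : ℕ → ℕ → A) {m : ℕ} (p q : Fin m → ℕ) (τ : Equiv.Perm (Fin m)) :
    dt s p (q ∘ τ) = ((Equiv.Perm.sign τ : ℤ) : A) * dt s p q :=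
  Matrix.det_permute' τ (Matrix.of fun a b : Fin m => s (p a) (q b))

lemma dt_symm (s : ℕ → ℕ → A) (hs : ∀ i j, s i j = s j i) {m : ℕ} (p q : Fin m → ℕ) :
    dt s p q = dt s q p := by
  rw [dt, ← Matrix.det_transpose, dt]
  congr 1
  ext a b
  simp [hs]

lemma relA_core [IsDomain A] [CharZero A] (s : ℕ → ℕ → A) (hs : ∀ i j, s i j = s j i) {m : ℕ}
    (p q : Fin m → ℕ) (S S' : Fin m → Prop) [DecidablePred S] [DecidablePred S']
    (hex : ∀ τ : Equiv.Perm (Fin m), ∃ b, S' b ∧ S (τ b)) (c : ℕ)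
    (hq : ∀ b, S' b → q b ≤ c) (hp : ∀ a, S a → c < p a) :
    dt s p q ∈ Submodule.span ℤ {x | ∃ p' q' : Fin m → ℕ, ∑ a, p' a < ∑ a, p a ∧
      ∑ a, p' a + ∑ a, q' a = ∑ a, p a + ∑ a, q a ∧ x = dt s p' q'} := by
  let P : ({b // S' b} ⊕ {a // S a} → ℕ) → Fin m → ℕ := fun z => ext' S p (z ∘ Sum.inr)
  let Q : ({b // S' b} ⊕ {a // S a} → ℕ) → Fin m → ℕ := fun z => ext' S' q (z ∘ Sum.inl)
  let F : ({b // S' b} ⊕ {a // S a} → ℕ) → A := fun z => dt s (P z) (Q z)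
  let z0 : {b // S' b} ⊕ {a // S a} → ℕ := Sum.elim (fun b => q b) (fun a => p a)
  have hP0 : P z0 = p := ext'_self S p
  have hQ0 : Q z0 = q := ext'_self S' q
  have hF : ∀ z (h1 : Equiv.Perm {b // S' b}) (h2 : Equiv.Perm {a // S a}), F (z ∘ Sum.map h1 h2) =
      ((Equiv.Perm.sign h1 : ℤ) : A) * ((Equiv.Perm.sign h2 : ℤ) : A) * F z := by
    intro z h1 h2
    have e1 : P (z ∘ Sum.map h1 h2) = P z ∘ Equiv.Perm.ofSubtype h2 :=
      ext'_comp S p (z ∘ Sum.inr) h2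
    have e2 : Q (z ∘ Sum.map h1 h2) = Q z ∘ Equiv.Perm.ofSubtype h1 :=
      ext'_comp S' q (z ∘ Sum.inl) h1
    simp only [F, e1, e2]
    rw [dt_perm_left, dt_perm_right]
    rw [Equiv.Perm.sign_ofSubtype, Equiv.Perm.sign_ofSubtype]
    ring
  obtain ⟨y, hy, hsum⟩ := antisym F hF z0
  have hzero : ∑ σ : Equiv.Perm ({b // S' b} ⊕ {a // S a}), ((Equiv.Perm.sign σ : ℤ) : A) * F (z0 ∘ σ) = 0 := by
    simp only [F, dt_expand, Finset.mul_sum]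
    rw [Finset.sum_comm]
    refine Finset.sum_eq_zero fun τ _ => ?_
    obtain ⟨b, hb, hτb⟩ := hex τ
    let u : {b // S' b} ⊕ {a // S a} := Sum.inl ⟨b, hb⟩
    let v : {b // S' b} ⊕ {a // S a} := Sum.inr ⟨τ b, hτb⟩
    have huv : u ≠ v := by simp [u, v]
    have hprod : ∀ z : {b // S' b} ⊕ {a // S a} → ℕ, ∏ i, s (P (z ∘ Equiv.swap u v) (τ i)) (Q (z ∘ Equiv.swap u v) i)
        = ∏ i, s (P z (τ i)) (Q z i) := by
      intro z
      refine Finset.prod_congr rfl fun i _ => ?_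
      by_cases hi : i = b
      · subst hi
        have a1 : ∀ z, P z (τ i) = z v := fun z =>
          ext'_pos S p (z ∘ Sum.inr) ⟨τ i, hτb⟩
        have a2 : ∀ z, Q z i = z u := fun z =>
          ext'_pos S' q (z ∘ Sum.inl) ⟨i, hb⟩
        rw [a1, a1, a2, a2]
        simp [hs]
      · have a1 : P (z ∘ Equiv.swap u v) (τ i) = P z (τ i) := by
          simp only [P, ext']
          split_ifs with h
          · simp only [Function.comp_apply]
            rw [Equiv.swap_apply_of_ne_of_ne]
            · simp [u]
            · simp only [v, ne_eq, Sum.inr.injEq, Subtype.mk.injEq]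
              exact fun h => hi (τ.injective h)
          · rfl
        have a2 : Q (z ∘ Equiv.swap u v) i = Q z i := by
          simp only [Q, ext']
          split_ifs with h
          · simp only [Function.comp_apply]
            rw [Equiv.swap_apply_of_ne_of_ne]
            · simp only [u, ne_eq, Sum.inl.injEq, Subtype.mk.injEq]
              exact hi
            · simp [v]
          · rfl
        rw [a1, a2]
    have hneg := Equiv.sum_comp (Equiv.mulRight (Equiv.swap u v))
      (fun σ : Equiv.Perm ({b // S' b} ⊕ {a // S a}) => ((Equiv.Perm.sign σ : ℤ) : A) *
        (((Equiv.Perm.sign τ : ℤ) : A) * ∏ i, s (P (z0 ∘ σ) (τ i)) (Q (z0 ∘ σ) i)))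
    have hneg2 : ∀ σ : Equiv.Perm ({b // S' b} ⊕ {a // S a}),
        ((Equiv.Perm.sign (Equiv.mulRight (Equiv.swap u v) σ) : ℤ) : A) *
        (((Equiv.Perm.sign τ : ℤ) : A) *
          ∏ i, s (P (z0 ∘ (Equiv.mulRight (Equiv.swap u v) σ)) (τ i))
            (Q (z0 ∘ (Equiv.mulRight (Equiv.swap u v) σ)) i)) =
        - (((Equiv.Perm.sign σ : ℤ) : A) *
        (((Equiv.Perm.sign τ : ℤ) : A) * ∏ i, s (P (z0 ∘ σ) (τ i)) (Q (z0 ∘ σ) i))) := by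
      intro σ
      have e : z0 ∘ (Equiv.mulRight (Equiv.swap u v) σ) = (z0 ∘ σ) ∘ Equiv.swap u v := by
        ext x; simp
      rw [e, hprod]
      simp [Equiv.Perm.sign_swap huv]
    simp only [hneg2, Finset.sum_neg_distrib] at hneg
    exact self_eq_neg.mp hneg.symm
  rw [hzero] at hsum
  have hcard : ((Fintype.card (Equiv.Perm {b // S' b} × Equiv.Perm {a // S a}) : ℕ) : A) ≠ 0 :=
    Nat.cast_ne_zero.mpr Fintype.card_ne_zero
  rw [nsmul_eq_mul, eq_comm, mul_eq_zero] at hsum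
  have hz := hsum.resolve_left hcard
  have hF0 : F z0 = dt s p q := by simp only [F, hP0, hQ0]
  rw [hF0] at hz
  rw [eq_neg_of_add_eq_zero_left hz]
  refine Submodule.neg_mem _ (Submodule.span_mono ?_ hy)
  rintro _ ⟨σ, hσ, rfl⟩
  refine ⟨P (z0 ∘ σ), Q (z0 ∘ σ), ?_, ?_, rfl⟩
  · have h1 := ext'_sum S p ((z0 ∘ σ) ∘ Sum.inr)
    have h2 := exch_sum z0 c (fun a => hq a a.2) (fun b => hp b b.2) σ hσ
    simp only [P, Function.comp_apply, z0, Sum.elim_inr] at h1 h2 ⊢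
    omega
  · have h1 := ext'_sum S p ((z0 ∘ σ) ∘ Sum.inr)
    have h2 := ext'_sum S' q ((z0 ∘ σ) ∘ Sum.inl)
    have h3 := Equiv.sum_comp σ z0
    rw [Fintype.sum_sum_type, Fintype.sum_sum_type] at h3
    simp only [P, Q, Function.comp_apply, z0, Sum.elim_inr, Sum.elim_inl] at h1 h2 h3 ⊢
    omega

lemma relA [IsDomain A] [CharZero A] (s : ℕ → ℕ → A) (hs : ∀ i j, s i j = s j i) (r : DRow)
    (hp : StrictMono r.p) (hq : StrictMono r.q) (j : Fin r.m) (hj : r.q j < r.p j) :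
    rp s r ∈ Submodule.span ℤ {x | ∃ p' q' : Fin r.m → ℕ, ∑ a, p' a < ∑ a, r.p a ∧
      ∑ a, p' a + ∑ a, q' a = ∑ a, r.p a + ∑ a, r.q a ∧ x = dt s p' q'} := by
  refine relA_core s hs r.p r.q (fun a => j ≤ a) (fun b => b ≤ j) ?_ (r.q j)
    (fun b hb => hq.monotone hb) (fun a ha => lt_of_lt_of_le hj (hp.monotone ha))
  intro τ
  by_contra hcon
  push Not at hcon
  have h1 : (Finset.Iic j).card ≤ (Finset.Iio j).card :=
    Finset.card_le_card_of_injOn τ (fun b hb => by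
      simp only [Finset.coe_Iic, Set.mem_Iic] at hb
      simpa using hcon b hb) τ.injective.injOn
  simp at h1

/-- a row of length one -/
def row1 (i j : ℕ) : DRow := ⟨1, fun _ => i, fun _ => j⟩

lemma rp_row1 (s : ℕ → ℕ → A) (i j : ℕ) : rp s (row1 i j) = s i j := by
  exact Matrix.det_fin_one _

lemma relB_core [IsDomain A] [CharZero A] (s : ℕ → ℕ → A) {m m' : ℕ}
    (p q : Fin m → ℕ) (p' q' : Fin m' → ℕ)
    (S : Fin m → Prop) (S' : Fin m' → Prop) [DecidablePred S] [DecidablePred S'] (c : ℕ)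
    (hp : ∀ b, S' b → p' b ≤ c) (hq : ∀ a, S a → c < q a) (N : ℕ)
    (hN : Fintype.card {b // S' b} + Fintype.card {a // S a} = N) :
    dt s p q * dt s q' p' ∈ Submodule.span ℤ
      ({x | ∃ (v : Fin m → ℕ) (w : Fin m' → ℕ), ∑ a, v a < ∑ a, q a ∧
        ∑ a, v a + ∑ a, w a = ∑ a, q a + ∑ a, p' a ∧ x = dt s p v * dt s q' w} ∪
       {x | ∃ (v w : Fin N → ℕ) (L : List DRow), N + (L.map DRow.m).sum = m + m' ∧
        x = dt s v w * tp s L}) := by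
  let Q : ({b // S' b} ⊕ {a // S a} → ℕ) → Fin m → ℕ := fun z => ext' S q (z ∘ Sum.inr)
  let P : ({b // S' b} ⊕ {a // S a} → ℕ) → Fin m' → ℕ := fun z => ext' S' p' (z ∘ Sum.inl)
  let F : ({b // S' b} ⊕ {a // S a} → ℕ) → A := fun z => dt s p (Q z) * dt s q' (P z)
  let z0 : {b // S' b} ⊕ {a // S a} → ℕ := Sum.elim (fun b => p' b) (fun a => q a)
  have hQ0 : Q z0 = q := ext'_self S q
  have hP0 : P z0 = p' := ext'_self S' p'
  have hF : ∀ z (h1 : Equiv.Perm {b // S' b}) (h2 : Equiv.Perm {a // S a}),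
      F (z ∘ Sum.map h1 h2) =
      ((Equiv.Perm.sign h1 : ℤ) : A) * ((Equiv.Perm.sign h2 : ℤ) : A) * F z := by
    intro z h1 h2
    have e1 : Q (z ∘ Sum.map h1 h2) = Q z ∘ Equiv.Perm.ofSubtype h2 :=
      ext'_comp S q (z ∘ Sum.inr) h2
    have e2 : P (z ∘ Sum.map h1 h2) = P z ∘ Equiv.Perm.ofSubtype h1 :=
      ext'_comp S' p' (z ∘ Sum.inl) h1
    simp only [F, e1, e2]
    rw [dt_perm_right, dt_perm_right]
    rw [Equiv.Perm.sign_ofSubtype, Equiv.Perm.sign_ofSubtype]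
    ring
  obtain ⟨y, hy, hsum⟩ := antisym F hF z0
  let w : Equiv.Perm (Fin m) × Equiv.Perm (Fin m') → {b // S' b} ⊕ {a // S a} → ℕ :=
    fun g => Sum.elim (fun b => q' (g.2 b)) (fun a => p (g.1 a))
  let D : ({b // S' b} ⊕ {a // S a} → ℕ) → A := fun w =>
    Matrix.det (Matrix.of fun x y => s (w x) (z0 y))
  let rest : Equiv.Perm (Fin m) × Equiv.Perm (Fin m') → A := fun g =>
    (∏ a : {a // ¬ S a}, s (p (g.1 a)) (q a)) * ∏ b : {b // ¬ S' b}, s (q' (g.2 b)) (p' b)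
  let f' : Equiv.Perm (Fin m) × Equiv.Perm (Fin m') → A := fun g =>
    ((Equiv.Perm.sign g.1 : ℤ) : A) * ((Equiv.Perm.sign g.2 : ℤ) : A) * (rest g * D (w g))
  have hFexp : ∀ z, F z = ∑ g : Equiv.Perm (Fin m) × Equiv.Perm (Fin m'),
      ((Equiv.Perm.sign g.1 : ℤ) : A) * ((Equiv.Perm.sign g.2 : ℤ) : A) *
        (rest g * ∏ x, s (w g x) (z x)) := by
    intro z
    simp only [F]
    rw [dt_expand, dt_expand, Finset.sum_mul_sum, ← Finset.univ_product_univ,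
      Finset.sum_product]
    refine Finset.sum_congr rfl fun τ _ => Finset.sum_congr rfl fun τ' _ => ?_
    rw [← Fintype.prod_subtype_mul_prod_subtype S, ← Fintype.prod_subtype_mul_prod_subtype S',
      Fintype.prod_sum_type]
    simp only [rest, w, Q, P, ext'_pos, ext'_neg, Sum.elim_inl, Sum.elim_inr,
      Function.comp_apply]
    ring
  have hD : ∀ g, ∑ σ : Equiv.Perm ({b // S' b} ⊕ {a // S a}), ((Equiv.Perm.sign σ : ℤ) : A) *
      ∏ x, s (w g x) (z0 (σ x)) = D (w g) := by
    intro g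
    simp only [D]
    rw [← Matrix.det_transpose, Matrix.det_apply']
    rfl
  have hswap : ∑ σ : Equiv.Perm ({b // S' b} ⊕ {a // S a}), ((Equiv.Perm.sign σ : ℤ) : A) *
      F (z0 ∘ σ) = ∑ g, f' g := by
    simp only [hFexp, Finset.mul_sum]
    rw [Finset.sum_comm]
    refine Finset.sum_congr rfl fun g _ => ?_
    simp only [f']
    rw [← hD g, Finset.mul_sum, Finset.mul_sum]
    refine Finset.sum_congr rfl fun σ _ => ?_
    simp only [Function.comp_apply]
    ring
  let ρ : Equiv.Perm {b // S' b} × Equiv.Perm {a // S a} →*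
      Equiv.Perm (Fin m) × Equiv.Perm (Fin m') :=
    MonoidHom.prod (Equiv.Perm.ofSubtype.comp (MonoidHom.snd _ _))
      (Equiv.Perm.ofSubtype.comp (MonoidHom.fst _ _))
  have hρ : Function.Injective ρ := by
    rintro ⟨a, b⟩ ⟨a', b'⟩ h
    simp only [ρ, MonoidHom.prod_apply, MonoidHom.comp_apply, MonoidHom.coe_snd,
      MonoidHom.coe_fst, Prod.mk.injEq] at h
    rw [Equiv.Perm.ofSubtype_injective h.1, Equiv.Perm.ofSubtype_injective h.2]
  have hf' : ∀ g h, f' (g * ρ h) = f' g := by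
    rintro ⟨τ, τ'⟩ ⟨h1, h2⟩
    have er : rest ((τ, τ') * ρ (h1, h2)) = rest (τ, τ') := by
      simp only [rest, ρ, MonoidHom.prod_apply, MonoidHom.comp_apply, MonoidHom.coe_snd,
        MonoidHom.coe_fst, Prod.mk_mul_mk, Equiv.Perm.mul_apply]
      congr 1
      · refine Finset.prod_congr rfl fun a _ => ?_
        rw [Equiv.Perm.ofSubtype_apply_of_not_mem h2 a.2]
      · refine Finset.prod_congr rfl fun a _ => ?_
        rw [Equiv.Perm.ofSubtype_apply_of_not_mem h1 a.2]
    have ew : w ((τ, τ') * ρ (h1, h2)) = w (τ, τ') ∘ Equiv.sumCongr h1 h2 := by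
      ext x
      rcases x with a | b
      · simp [w, ρ]
      · simp [w, ρ]
    have eD : D (w (τ, τ') ∘ Equiv.sumCongr h1 h2) =
        ((Equiv.Perm.sign (Equiv.Perm.sumCongr h1 h2) : ℤ) : A) * D (w (τ, τ')) :=
      Matrix.det_permute (Equiv.Perm.sumCongr h1 h2)
        (Matrix.of fun x y => s (w (τ, τ') x) (z0 y))
    simp only [f']
    rw [er, ew, eD]
    simp only [ρ, MonoidHom.prod_apply, MonoidHom.comp_apply, MonoidHom.coe_snd,
        MonoidHom.coe_fst, Prod.mk_mul_mk, Equiv.Perm.sign_mul, Equiv.Perm.sign_ofSubtype,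
        Equiv.Perm.sign_sumCongr]
    rcases Int.units_eq_one_or (Equiv.Perm.sign h1) with e1 | e1 <;>
      rcases Int.units_eq_one_or (Equiv.Perm.sign h2) with e2 | e2 <;> simp [e1, e2]
  obtain ⟨y', hy', hsum'⟩ := sum_group ρ hρ f' hf'
  rw [hswap, hsum', nsmul_eq_mul, nsmul_eq_mul] at hsum
  have hcard : ((Fintype.card (Equiv.Perm {b // S' b} × Equiv.Perm {a // S a}) : ℕ) : A) ≠ 0 :=
    Nat.cast_ne_zero.mpr Fintype.card_ne_zero
  have hz := mul_left_cancel₀ hcard hsum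
  have hF0 : F z0 = dt s p q * dt s q' p' := by simp only [F, hP0, hQ0]
  rw [hF0] at hz
  have hz' : dt s p q * dt s q' p' = (f' 1 + y') - y := by rw [hz]; ring
  rw [hz']
  have hall : ∀ g, f' g ∈ Submodule.span ℤ {x | ∃ (v w : Fin N → ℕ) (L : List DRow),
      N + (L.map DRow.m).sum = m + m' ∧ x = dt s v w * tp s L} := by
    intro g
    have hbase : rest g * D (w g) ∈ Submodule.span ℤ {x | ∃ (v w : Fin N → ℕ) (L : List DRow),
        N + (L.map DRow.m).sum = m + m' ∧ x = dt s v w * tp s L} := by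
      apply Submodule.subset_span
      have hcardι : Fintype.card ({b // S' b} ⊕ {a // S a}) = N := by
        rw [Fintype.card_sum, hN]
      let e : Fin N ≃ {b // S' b} ⊕ {a // S a} := (Fintype.equivFinOfCardEq hcardι).symm
      refine ⟨w g ∘ e, z0 ∘ e,
        ((Finset.univ : Finset {a // ¬ S a}).toList.map fun a : {a // ¬ S a} => row1 (p (g.1 a)) (q a)) ++
        ((Finset.univ : Finset {b // ¬ S' b}).toList.map fun b : {b // ¬ S' b} => row1 (q' (g.2 b)) (p' b)),
        ?_, ?_⟩
      · have c1 := Fintype.card_subtype_compl S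
        have c2 := Fintype.card_subtype_compl S'
        have c3 := Fintype.card_subtype_le S
        have c4 := Fintype.card_subtype_le S'
        simp only [Fintype.card_fin] at c1 c2 c3 c4
        have l1 : ∀ (ι : Type) (l : List ι) (u v : ι → ℕ),
            ((l.map fun a => row1 (u a) (v a)).map DRow.m).sum = l.length := by
          intro ι l u v
          induction l with
          | nil => rfl
          | cons a l ih =>
            rw [List.map_cons, List.map_cons, List.sum_cons, ih, List.length_cons]
            exact Nat.add_comm 1 _
        rw [List.map_append, List.sum_append, l1 _ _ (fun a : {a // ¬ S a} => p (g.1 a)) (fun a : {a // ¬ S a} => q a),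
          l1 _ _ (fun b : {b // ¬ S' b} => q' (g.2 b)) (fun b : {b // ¬ S' b} => p' b)]
        simp only [Finset.length_toList, Finset.card_univ]
        omega
      · have d1 : dt s (w g ∘ e) (z0 ∘ e) = D (w g) :=
          Matrix.det_submatrix_equiv_self e (Matrix.of fun x y => s (w g x) (z0 y))
        rw [d1, mul_comm]
        congr 1
        simp only [rest, tp, List.map_append, List.prod_append, List.map_map]
        congr 1
        · rw [← Finset.prod_map_toList]
          congr 1
          refine List.map_congr_left fun a _ => ?_
          simp [rp_row1]
        · rw [← Finset.prod_map_toList]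
          congr 1
          refine List.map_congr_left fun a _ => ?_
          simp [rp_row1]
    simp only [f']
    rcases Int.units_eq_one_or (Equiv.Perm.sign g.1) with e1 | e1 <;>
      rcases Int.units_eq_one_or (Equiv.Perm.sign g.2) with e2 | e2 <;>
      simp only [e1, e2, Units.val_one, Units.val_neg, Int.cast_one, Int.cast_neg, one_mul,
        neg_mul, mul_one, neg_neg, neg_mem_iff] <;> exact hbase
  refine Submodule.sub_mem _ (Submodule.span_mono Set.subset_union_right
    (Submodule.add_mem _ (hall 1) ?_)) (Submodule.span_mono ?_ hy)
  · refine Submodule.span_le.mpr ?_ hy'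
    rintro _ ⟨g, _, rfl⟩
    exact hall g
  · rintro _ ⟨σ, hσ, rfl⟩
    left
    refine ⟨Q (z0 ∘ σ), P (z0 ∘ σ), ?_, ?_, rfl⟩
    · have h1 := ext'_sum S q ((z0 ∘ σ) ∘ Sum.inr)
      have h2 := exch_sum z0 c (fun a => hp a a.2) (fun b => hq b b.2) σ hσ
      simp only [Q, Function.comp_apply, z0, Sum.elim_inr] at h1 h2 ⊢
      omega
    · have h1 := ext'_sum S q ((z0 ∘ σ) ∘ Sum.inr)
      have h2 := ext'_sum S' p' ((z0 ∘ σ) ∘ Sum.inl)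
      have h3 := Equiv.sum_comp σ z0
      rw [Fintype.sum_sum_type, Fintype.sum_sum_type] at h3
      simp only [P, Q, Function.comp_apply, z0, Sum.elim_inr, Sum.elim_inl] at h1 h2 h3 ⊢
      omega

lemma relB [IsDomain A] [CharZero A] (s : ℕ → ℕ → A) (hs : ∀ i j, s i j = s j i) (r t : DRow)
    (hq : StrictMono r.q) (hp : StrictMono t.p) (j : Fin t.m) (hjm : (j : ℕ) < r.m)
    (hj : t.p j < r.q ⟨j, hjm⟩) :
    rp s r * rp s t ∈ Submodule.span ℤ
      ({x | ∃ (v : Fin r.m → ℕ) (w : Fin t.m → ℕ), ∑ a, v a < ∑ a, r.q a ∧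
        ∑ a, v a + ∑ a, w a = ∑ a, r.q a + ∑ a, t.p a ∧ x = dt s r.p v * dt s w t.q} ∪
       {x | ∃ (v w : Fin (r.m + 1) → ℕ) (L : List DRow),
        r.m + 1 + (L.map DRow.m).sum = r.m + t.m ∧ x = dt s v w * tp s L}) := by
  have := relB_core s r.p r.q t.p t.q (fun a => (⟨j, hjm⟩ : Fin r.m) ≤ a) (fun b => b ≤ j)
    (t.p j) (fun b hb => hp.monotone hb) (fun a ha => lt_of_lt_of_le hj (hq.monotone ha))
    (r.m + 1) (by
      rw [Fintype.card_subtype, Fintype.card_subtype]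
      have e1 : (Finset.univ.filter fun b => b ≤ j) = Finset.Iic j := by ext; simp
      have e2 : (Finset.univ.filter fun a => (⟨j, hjm⟩ : Fin r.m) ≤ a) =
        Finset.Ici ⟨j, hjm⟩ := by ext; simp
      rw [e1, e2]
      simp
      omega)
  rw [dt_symm s hs t.q t.p] at this
  refine Submodule.span_mono (Set.union_subset_union_left _ ?_) this
  rintro _ ⟨v, w, h1, h2, rfl⟩
  exact ⟨v, w, h1, h2, by rw [dt_symm s hs t.q w]⟩

end Relations

/-! ### Part 3: straightening -/

section Straighten

variable {A : Type*} [CommRing A]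

def wtl (l : List ℕ) : ℕ := (l.map fun m => 3 ^ m - 1).sum

lemma wtl_lt (l : List ℕ) : wtl l < 3 ^ l.sum := by
  induction l with
  | nil => simp [wtl]
  | cons m l ih =>
    have h : wtl (m :: l) = 3 ^ m - 1 + wtl l := by simp [wtl]
    rw [h, List.sum_cons, pow_add]
    have h1 : 1 ≤ 3 ^ m := Nat.one_le_pow _ _ (by norm_num)
    obtain ⟨a, ha⟩ := Nat.exists_eq_add_of_le h1
    have h2 : 1 ≤ 3 ^ l.sum := Nat.one_le_pow _ _ (by norm_num)
    obtain ⟨b, hb⟩ := Nat.exists_eq_add_of_le h2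
    rw [ha, hb]
    rw [hb] at ih
    have : (1 + a) * (1 + b) = 1 + a + b + a * b := by ring
    have h3 : 0 ≤ a * b := Nat.zero_le _
    omega

lemma wtl_append (l l' : List ℕ) : wtl (l ++ l') = wtl l + wtl l' := by simp [wtl]

lemma wtl_cons (m : ℕ) (l : List ℕ) : wtl (m :: l) = 3 ^ m - 1 + wtl l := by simp [wtl]

lemma wtl_perm {l l' : List ℕ} (h : l.Perm l') : wtl l = wtl l' := (h.map _).sum_eq

def MM : List DRow → ℕ
  | [] => 0
  | r :: rs => (2 * rs.length + 2) * (∑ a, r.p a) + (2 * rs.length + 1) * (∑ a, r.q a) + MM rs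

lemma MM_append_lt (C X Y : List DRow) (hl : X.length = Y.length) (h : MM X < MM Y) :
    MM (C ++ X) < MM (C ++ Y) := by
  induction C with
  | nil => simpa using h
  | cons c C ih =>
    simp only [List.cons_append, MM, List.length_append, hl]
    omega

lemma tp_cons (s : ℕ → ℕ → A) (r : DRow) (T : List DRow) : tp s (r :: T) = rp s r * tp s T := by
  simp [tp]

lemma tp_append (s : ℕ → ℕ → A) (T T' : List DRow) : tp s (T ++ T') = tp s T * tp s T' := by
  simp [tp]

lemma sort_fun {m : ℕ} (p : Fin m → ℕ) (hp : Function.Injective p) :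
    ∃ τ : Equiv.Perm (Fin m), StrictMono (p ∘ τ) :=
  ⟨Tuple.sort p, (Tuple.monotone_sort p).strictMono_of_injective
    (hp.comp (Tuple.sort p).injective)⟩

lemma dt_zero_left (s : ℕ → ℕ → A) {m : ℕ} (p q : Fin m → ℕ) (hp : ¬ Function.Injective p) :
    dt s p q = 0 := by
  rw [Function.Injective] at hp
  push Not at hp
  obtain ⟨a, b, hab, hne⟩ := hp
  exact Matrix.det_zero_of_row_eq hne (by ext j; simp [hab])

lemma dt_zero_right (s : ℕ → ℕ → A) {m : ℕ} (p q : Fin m → ℕ) (hq : ¬ Function.Injective q) :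
    dt s p q = 0 := by
  rw [Function.Injective] at hq
  push Not at hq
  obtain ⟨a, b, hab, hne⟩ := hq
  exact Matrix.det_zero_of_column_eq hne (by intro j; simp [hab])

lemma row_norm (s : ℕ → ℕ → A) (r : DRow) : rp s r = 0 ∨ ∃ r' : DRow, r'.m = r.m ∧
    ∑ a, r'.p a = ∑ a, r.p a ∧ ∑ a, r'.q a = ∑ a, r.q a ∧ StrictMono r'.p ∧ StrictMono r'.q ∧
    (rp s r = rp s r' ∨ rp s r = - rp s r') := by
  by_cases hp : Function.Injective r.p
  · by_cases hq : Function.Injective r.q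
    · right
      obtain ⟨τ, hτ⟩ := sort_fun _ hp
      obtain ⟨σ, hσ⟩ := sort_fun _ hq
      refine ⟨⟨r.m, r.p ∘ τ, r.q ∘ σ⟩, rfl, Equiv.sum_comp τ r.p, Equiv.sum_comp σ r.q, hτ, hσ, ?_⟩
      simp only [rp]
      rw [dt_perm_left, dt_perm_right]
      rcases Int.units_eq_one_or (Equiv.Perm.sign τ) with e1 | e1 <;>
      rcases Int.units_eq_one_or (Equiv.Perm.sign σ) with e2 | e2 <;>
      simp [e1, e2]
    · exact Or.inl (dt_zero_right s _ _ hq)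
  · exact Or.inl (dt_zero_left s _ _ hp)

lemma tab_norm (s : ℕ → ℕ → A) (T : List DRow) : tp s T = 0 ∨ ∃ T' : List DRow,
    T'.map DRow.m = T.map DRow.m ∧ MM T' = MM T ∧
    (∀ r ∈ T', StrictMono r.p ∧ StrictMono r.q) ∧ (tp s T = tp s T' ∨ tp s T = - tp s T') := by
  induction T with
  | nil => exact Or.inr ⟨[], rfl, rfl, by simp, Or.inl rfl⟩
  | cons r T ih =>
    rcases row_norm s r with h | ⟨r', h1, h2, h3, h4, h5, h6⟩
    · left; rw [tp_cons, h, zero_mul]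
    rcases ih with h | ⟨T', g1, g2, g3, g4⟩
    · left; rw [tp_cons, h, mul_zero]
    right
    have hl : T'.length = T.length := by simpa using congrArg List.length g1
    refine ⟨r' :: T', by simp [h1, g1], by simp [MM, h2, h3, g2, hl], ?_, ?_⟩
    · intro x hx
      rcases List.mem_cons.mp hx with rfl | hx
      · exact ⟨h4, h5⟩
      · exact g3 x hx
    · rw [tp_cons, tp_cons]
      rcases h6 with e1 | e1 <;> rcases g4 with e2 | e2 <;> simp [e1, e2]

lemma chain_or {α : Type*} (R : α → α → Prop) (T : List α) : List.IsChain R T ∨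
    ∃ C r t B, T = C ++ r :: t :: B ∧ ¬ R r t := by
  induction T with
  | nil => left; simp
  | cons a T ih =>
    rcases ih with h | ⟨C, r, t, B, rfl, h⟩
    · cases T with
      | nil => left; simp
      | cons b T =>
        by_cases hR : R a b
        · left; exact List.isChain_cons_cons.mpr ⟨hR, h⟩
        · exact Or.inr ⟨[], a, b, T, rfl, hR⟩
    · exact Or.inr ⟨a :: C, r, t, B, rfl, h⟩

lemma mul_span {S : Set A} {W : Submodule ℤ A} (c x : A) (hx : x ∈ Submodule.span ℤ S)
    (h : ∀ y ∈ S, c * y ∈ W) : c * x ∈ W := by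
  have : Submodule.span ℤ S ≤ W.comap (LinearMap.mulLeft ℤ c) :=
    Submodule.span_le.mpr fun y hy => h y hy
  exact this hx

def WW (s : ℕ → ℕ → A) : Submodule ℤ A :=
  Submodule.span ℤ {x | ∃ T, DoublyStandard T ∧ (∀ r ∈ T, 1 ≤ r.m) ∧ x = tp s T}

lemma straighten_shape [IsDomain A] [CharZero A] (s : ℕ → ℕ → A) (hs : ∀ i j, s i j = s j i)
    (l : List ℕ) (hl : l.Pairwise (· ≥ ·)) (hl1 : ∀ m ∈ l, 1 ≤ m)
    (IH : ∀ T : List DRow, (T.map DRow.m).sum = l.sum → wtl l < wtl (T.map DRow.m) →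
      tp s T ∈ WW s) :
    ∀ (N : ℕ) (T : List DRow), MM T < N → T.map DRow.m = l → tp s T ∈ WW s := by
  intro N
  induction N with
  | zero => intro T h; omega
  | succ N ihN =>
    intro T0 hM0 hT0
    rcases tab_norm s T0 with h | ⟨T, g1, g2, g3, g4⟩
    · rw [h]; exact Submodule.zero_mem _
    have hT : T.map DRow.m = l := g1.trans hT0
    have hM : MM T < N + 1 := by omega
    suffices hmain : tp s T ∈ WW s by
      rcases g4 with e | e
      · rwa [e]
      · rw [e]; exact Submodule.neg_mem _ hmain
    clear g4 g2 g1 hT0 hM0 T0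
    have hpw : T.Pairwise (fun r t => t.m ≤ r.m) := by
      rw [← hT, List.pairwise_map] at hl
      exact hl
    have hone : ∀ r ∈ T, 1 ≤ r.m := fun r hr => hl1 _ (hT ▸ List.mem_map_of_mem hr)
    by_cases hA : ∀ r ∈ T, ∀ j, r.p j ≤ r.q j
    · rcases chain_or (fun r s : DRow => ∀ (j : Fin s.m) (hj : (j : ℕ) < r.m),
        r.q ⟨j, hj⟩ ≤ s.p j) T with hB | ⟨C, r, t, B, rfl, hB⟩
      · exact Submodule.subset_span ⟨T, ⟨hpw.isChain, g3, hA, hB⟩, hone, rfl⟩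
      · push Not at hB
        obtain ⟨j, hjm, hj⟩ := hB
        have hrt : t.m ≤ r.m := by
          have := (List.pairwise_append.mp hpw).2.1
          exact (List.pairwise_cons.mp this).1 t (by simp)
        have ht1 : 1 ≤ t.m := hone t (by simp)
        have key := relB s hs r t (g3 r (by simp)).2 (g3 t (by simp)).1 j hjm hj
        have e : tp s (C ++ r :: t :: B) = (tp s C * tp s B) * (rp s r * rp s t) := by
          rw [tp_append, tp_cons, tp_cons]; ring
        rw [e]
        refine mul_span _ _ key ?_
        rintro y (⟨v, w, h1, h2, rfl⟩ | ⟨v, w, L, h1, rfl⟩)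
        · have e2 : (tp s C * tp s B) * (dt s r.p v * dt s w t.q) =
              tp s (C ++ ⟨r.m, r.p, v⟩ :: ⟨t.m, w, t.q⟩ :: B) := by
            rw [tp_append, tp_cons, tp_cons]; simp only [rp]; ring
          rw [e2]
          apply ihN
          · refine lt_of_lt_of_le (MM_append_lt C _ (r :: t :: B) rfl ?_) (Nat.lt_succ_iff.mp hM)
            simp only [MM, List.length_cons]
            nlinarith
          · rw [← hT]; simp
        · have e2 : (tp s C * tp s B) * (dt s v w * tp s L) =
              tp s (C ++ ⟨r.m + 1, v, w⟩ :: L ++ B) := by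
            rw [tp_append, tp_append, tp_cons]; simp only [rp]; ring
          rw [e2]
          apply IH
          · rw [← hT]
            simp only [List.map_append, List.map_cons, List.sum_append, List.sum_cons]
            omega
          · rw [← hT]
            simp only [List.map_append, List.map_cons, wtl_append, wtl_cons]
            have a1 : 3 ^ t.m ≤ 3 ^ r.m := Nat.pow_le_pow_right (by norm_num) hrt
            have a2 : 1 ≤ 3 ^ t.m := Nat.one_le_pow _ _ (by norm_num)
            rw [pow_succ]
            omega
    · push Not at hA
      obtain ⟨r, hr, j, hj⟩ := hA
      obtain ⟨C, B, rfl⟩ := List.append_of_mem hr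
      have key := relA s hs r (g3 r hr).1 (g3 r hr).2 j hj
      have e : tp s (C ++ r :: B) = (tp s C * tp s B) * rp s r := by
        rw [tp_append, tp_cons]; ring
      rw [e]
      refine mul_span _ _ key ?_
      rintro y ⟨v, w, h1, h2, rfl⟩
      have e2 : (tp s C * tp s B) * dt s v w = tp s (C ++ ⟨r.m, v, w⟩ :: B) := by
        rw [tp_append, tp_cons]; simp only [rp]; ring
      rw [e2]
      apply ihN
      · refine lt_of_lt_of_le (MM_append_lt C _ (r :: B) rfl ?_) (Nat.lt_succ_iff.mp hM)
        simp only [MM]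
        nlinarith
      · rw [← hT]; simp

lemma tp_perm (s : ℕ → ℕ → A) {T T' : List DRow} (h : T.Perm T') : tp s T = tp s T' :=
  (h.map _).prod_eq

lemma rp_zero (s : ℕ → ℕ → A) (r : DRow) (h : r.m = 0) : rp s r = 1 := by
  obtain ⟨m, p, q⟩ := r
  simp only at h
  subst h
  simp [rp, dt]

lemma filter_norm (s : ℕ → ℕ → A) (T : List DRow) : ∃ T' : List DRow, (∀ r ∈ T', 1 ≤ r.m) ∧
    tp s T = tp s T' ∧ (T'.map DRow.m).sum = (T.map DRow.m).sum ∧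
    wtl (T'.map DRow.m) = wtl (T.map DRow.m) := by
  induction T with
  | nil => exact ⟨[], by simp, rfl, rfl, rfl⟩
  | cons r T ih =>
    obtain ⟨T', h1, h2, h3, h4⟩ := ih
    by_cases h : r.m = 0
    · refine ⟨T', h1, ?_, ?_, ?_⟩
      · rw [tp_cons, rp_zero s r h, one_mul, h2]
      · simp [h, h3]
      · simp [wtl_cons, h, h4]
    · refine ⟨r :: T', ?_, ?_, ?_, ?_⟩
      · intro x hx
        rcases List.mem_cons.mp hx with rfl | hx
        · omega
        · exact h1 x hx
      · rw [tp_cons, tp_cons, h2]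
      · simp [h3]
      · simp [wtl_cons, h4]

lemma straighten [IsDomain A] [CharZero A] (s : ℕ → ℕ → A) (hs : ∀ i j, s i j = s j i) :
    ∀ (d : ℕ) (T : List DRow), 3 ^ (T.map DRow.m).sum ≤ wtl (T.map DRow.m) + d →
      tp s T ∈ WW s := by
  intro d
  induction d with
  | zero =>
    intro T h
    have := wtl_lt (T.map DRow.m)
    omega
  | succ d ih =>
    intro T h
    obtain ⟨T1, h1, h2, h3, h4⟩ := filter_norm s T
    let le : DRow → DRow → Bool := fun a b => decide (b.m ≤ a.m)
    let T2 := T1.mergeSort le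
    have hperm : T2.Perm T1 := List.mergeSort_perm T1 le
    have hsort : T2.Pairwise (fun a b => le a b = true) :=
      List.pairwise_mergeSort (fun a b c hab hbc => by
        simp only [le, decide_eq_true_eq] at *; omega) (fun a b => by
        simp only [le, Bool.or_eq_true, decide_eq_true_eq]; omega) T1
    rw [h2, ← tp_perm s hperm]
    have hm := hperm.map DRow.m
    refine straighten_shape s hs (T2.map DRow.m) ?_ ?_ ?_ (MM T2 + 1) T2 (Nat.lt_succ_self _) rfl
    · rw [List.pairwise_map]
      exact hsort.imp fun {a b} hab => by simpa [le] using hab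
    · intro m hm'
      obtain ⟨r, hr, rfl⟩ := List.mem_map.mp hm'
      exact h1 r (hperm.mem_iff.mp hr)
    · intro T' e1 e2
      apply ih
      rw [e1]
      rw [hm.sum_eq, h3]
      rw [wtl_perm hm, h4] at e2
      omega

end Straighten

/-! ### Part 4: transfer -/

section Transfer

variable {n : ℕ} {K : Type*} [Field K]

lemma tpair_symm (i j : ℕ) : tpair n K i j = tpair n K j i := by
  simp [tpair, mul_comm]

noncomputable def genS (i j : ℕ) : MvPolynomial (Sym2 ℕ) ℤ := X s(i, j)

noncomputable def tr (n : ℕ) (K : Type*) [Field K] :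
    MvPolynomial (Sym2 ℕ) ℤ →+* MvPolynomial (ℕ × Fin n) K :=
  eval₂Hom (Int.castRingHom _)
    (Sym2.lift ⟨fun i j => tpair n K i j, fun i j => tpair_symm i j⟩)

lemma tr_genS (i j : ℕ) : tr n K (genS i j) = tpair n K i j := by
  simp [tr, genS]

lemma tr_rp (r : DRow) : tr n K (rp genS r) = rowPoly n K r := by
  simp only [rp, dt, rowPoly]
  rw [RingHom.map_det]
  congr 1
  ext a b : 2
  simp [tr_genS]

lemma tr_tp (T : List DRow) : tr n K (tp genS T) = tabPoly n K T := by
  simp only [tp, tabPoly, map_list_prod, List.map_map]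
  congr 1
  exact List.map_congr_left fun r _ => tr_rp r

lemma tabPoly_mem (T : List DRow) : tabPoly n K T ∈ Submodule.span K
    (Set.range (fun T : {T : List DRow // DoublyStandard T ∧ ∀ r ∈ T, 1 ≤ r.m ∧ r.m ≤ n} =>
            tabPoly n K T.1)) := by
  have h := straighten (A := MvPolynomial (Sym2 ℕ) ℤ) genS
    (fun i j => by simp [genS, Sym2.eq_swap]) (3 ^ (T.map DRow.m).sum) T (Nat.le_add_left _ _)
  rw [← tr_tp]
  have hle : WW (A := MvPolynomial (Sym2 ℕ) ℤ) genS ≤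
      ((Submodule.span K (Set.range (fun T : {T : List DRow // DoublyStandard T ∧
        ∀ r ∈ T, 1 ≤ r.m ∧ r.m ≤ n} => tabPoly n K T.1))).toAddSubgroup.comap
          (tr n K).toAddMonoidHom).toIntSubmodule := by
    refine Submodule.span_le.mpr ?_
    rintro _ ⟨T, h1, h2, rfl⟩
    change tr n K (tp genS T) ∈ Submodule.span K _
    rw [tr_tp]
    by_cases hn : ∀ r ∈ T, r.m ≤ n
    · exact Submodule.subset_span ⟨⟨T, h1, fun r hr => ⟨h2 r hr, hn r hr⟩⟩, rfl⟩
    · push Not at hn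
      obtain ⟨r, hr, hlt⟩ := hn
      have : tabPoly n K T = 0 := by
        refine List.prod_eq_zero ?_
        rw [← rowPoly_zero_of_lt (K := K) r hlt]
        exact List.mem_map_of_mem hr
      rw [this]
      exact Submodule.zero_mem _
  exact hle h

lemma rowPoly_mem (r : DRow) : rowPoly n K r ∈ Rsub n K := by
  rw [rowPoly, Matrix.det_apply]
  refine Subalgebra.sum_mem _ fun σ _ => ?_
  rw [Units.smul_def]
  refine Subalgebra.zsmul_mem _ (Subalgebra.prod_mem _ fun a _ => ?_) _
  exact Algebra.subset_adjoin ⟨(_, _), rfl⟩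

lemma part2 : Submodule.span K
        (Set.range
          (fun T : {T : List DRow // DoublyStandard T ∧ ∀ r ∈ T, 1 ≤ r.m ∧ r.m ≤ n} =>
            tabPoly n K T.1)) =
      Subalgebra.toSubmodule (Rsub n K) := by
  apply le_antisymm
  · refine Submodule.span_le.mpr ?_
    rintro _ ⟨T, rfl⟩
    refine Subalgebra.list_prod_mem _ fun x hx => ?_
    obtain ⟨r, _, rfl⟩ := List.mem_map.mp hx
    exact rowPoly_mem r
  · rw [Rsub, Algebra.adjoin_eq_span]
    refine Submodule.span_le.mpr ?_
    intro x hx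
    have : ∃ T : List DRow, x = tabPoly n K T := by
      induction hx using Submonoid.closure_induction with
      | mem x hx =>
        obtain ⟨⟨i, j⟩, rfl⟩ := hx
        refine ⟨[row1 i j], ?_⟩
        rw [← tr_tp]
        simp [tp, rp_row1, tr_genS]
      | one => exact ⟨[], by simp [tabPoly]⟩
      | mul x y _ _ hx hy =>
        obtain ⟨T, rfl⟩ := hx
        obtain ⟨T', rfl⟩ := hy
        exact ⟨T ++ T', by simp [tabPoly]⟩
    obtain ⟨T, rfl⟩ := this
    exact tabPoly_mem T

end Transfer

/-- De Concini–Procesi: the polynomials `φ(T)`, for `T` ranging over the doubly standard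
tableaux with rows of length between `1` and `n`, form a basis of `R` as a `K`-vector
space (they are linearly independent and span `R`). -/
theorem stmt19 (K : Type*) [Field K] [Infinite K] (h2 : (2 : K) ≠ 0)
    (n : ℕ) (hn : 1 ≤ n) :
    LinearIndependent K
      (fun T : {T : List DRow // DoublyStandard T ∧ ∀ r ∈ T, 1 ≤ r.m ∧ r.m ≤ n} =>
        tabPoly n K T.1) ∧
    Submodule.span K
        (Set.range
          (fun T : {T : List DRow // DoublyStandard T ∧ ∀ r ∈ T, 1 ≤ r.m ∧ r.m ≤ n} =>
            tabPoly n K T.1)) =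
      Subalgebra.toSubmodule (Rsub n K) := by
  exact ⟨part1, part2⟩
end
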